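/- arXiv:2601.13906 — 2 statements merged into one kernel-verified Lean document; each statement's English description precedes it below -/
import Mathlib

section
/- Let 𝒫₂ = {AABB, ABBA}, where AABB is the 2-pattern {{1,2},{3,4}} and ABBA is the 2-pattern {{1,4},{2,3}}. Then asymptotically almost surely z_{𝒫₂}(RM_n^(2)) = Θ(n^(1/2)); that is, there exist constants c₁, c₂ > 0 such that the probability that c₁·n^(1/2) ≤ z_{𝒫₂}(RM_n^(2)) ≤ c₂·n^(1/2) tends to 1 as n → ∞. -/
open Finset
open scoped Classical

/-- An ordered `r`-matching of size `n`: a partition of `[r*n] = {1,…,r*n}` into `n`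
pairwise disjoint `r`-element subsets (the edges). -/
def IsOrderedMatching (r n : ℕ) (M : Finset (Finset ℕ)) : Prop :=
  M.card = n ∧ (∀ e ∈ M, e.card = r) ∧
  (∀ e ∈ M, ∀ f ∈ M, e ≠ f → Disjoint e f) ∧
  M.biUnion id = Finset.Icc 1 (r * n)

/-- Two disjoint `r`-element sets `e`, `f` form the `r`-pattern `P`: the unique
order-preserving bijection from `e ∪ f` onto `[2r]` maps the pair `{e, f}` onto `P`. -/
def FormsPattern (r : ℕ) (e f : Finset ℕ) (P : Finset (Finset ℕ)) : Prop :=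
  ∃ φ : ℕ → ℕ, StrictMonoOn φ ↑(e ∪ f) ∧
    (e ∪ f).image φ = Finset.Icc 1 (2 * r) ∧
    ({e.image φ, f.image φ} : Finset (Finset ℕ)) = P

/-- A `Ps`-clique: a family of pairwise disjoint `r`-element subsets of `ℕ`, every two of
which form a pattern belonging to `Ps`. -/
def IsClique (r : ℕ) (Ps : Set (Finset (Finset ℕ))) (K : Finset (Finset ℕ)) : Prop :=
  (∀ e ∈ K, e.card = r) ∧ (∀ e ∈ K, ∀ f ∈ K, e ≠ f → Disjoint e f) ∧
  (∀ e ∈ K, ∀ f ∈ K, e ≠ f → ∃ P ∈ Ps, FormsPattern r e f P)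

/-- `z_Ps(M)`: the maximum size of a subfamily of `M` that is a `Ps`-clique. -/
noncomputable def zClique (r : ℕ) (Ps : Set (Finset (Finset ℕ))) (M : Finset (Finset ℕ)) : ℕ :=
  sSup {k | ∃ K : Finset (Finset ℕ), K ⊆ M ∧ IsClique r Ps K ∧ K.card = k}

/-- All ordered `r`-matchings of size `n` (as a finset). -/
noncomputable def matchingFamilies (r n : ℕ) : Finset (Finset (Finset ℕ)) :=
  ((Finset.Icc 1 (r * n)).powerset.powerset).filter (IsOrderedMatching r n)

/-- The probability of the event `A` for a uniformly random ordered `r`-matching of size `n`. -/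
noncomputable def prob (r n : ℕ) (A : Finset (Finset ℕ) → Prop) : ℝ :=
  (((matchingFamilies r n).filter A).card : ℝ) / ((matchingFamilies r n).card : ℝ)

/-- Expectation of `X` with respect to a uniformly random ordered `r`-matching of size `n`. -/
noncomputable def expect (r n : ℕ) (X : Finset (Finset ℕ) → ℝ) : ℝ :=
  (∑ M ∈ matchingFamilies r n, X M) / ((matchingFamilies r n).card : ℝ)

/-- An `r`-partite `r`-pattern: each edge contains exactly one of `{2i-1, 2i}` for each
`i = 1, …, r`. -/
def IsPartitePattern (r : ℕ) (P : Finset (Finset ℕ)) : Prop :=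
  IsOrderedMatching r 2 P ∧
  ∀ e ∈ P, ∀ i ∈ Finset.Icc 1 r, (e ∩ {2 * i - 1, 2 * i}).card = 1

/-- An `r`-pattern `P` is collectable if there exist arbitrarily large `{P}`-cliques. -/
def Collectable (r : ℕ) (P : Finset (Finset ℕ)) : Prop :=
  ∀ k : ℕ, ∃ K : Finset (Finset ℕ), IsClique r {P} K ∧ K.card = k

/-- The word of a pattern `P` over `{A=true, B=false}`: the `j`-th letter is `true` iff
vertex `j` lies in the edge of `P` containing `1`. -/
noncomputable def patternWord (r : ℕ) (P : Finset (Finset ℕ)) : List Bool :=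
  (List.range (2 * r)).map (fun j => decide (∃ e ∈ P, 1 ∈ e ∧ j + 1 ∈ e))

/-- `lam` is a splitting of the word `w` into consecutive blocks of the form
`A^t B^t` or `B^t A^t` with half-lengths given by `lam`. -/
def IsBlockSplitting (w : List Bool) (lam : List ℕ) : Prop :=
  (∀ t ∈ lam, 1 ≤ t) ∧
  ∃ bs : List Bool, bs.length = lam.length ∧
    w = (List.zipWith (fun t b => List.replicate t b ++ List.replicate t !b) lam bs).flatten

/-- The pattern `P` has composition `lam` (the sequence of half-lengths of the blocks of
its unique splitting). -/
def HasComposition (r : ℕ) (P : Finset (Finset ℕ)) (lam : List ℕ) : Prop :=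
  IsBlockSplitting (patternWord r P) lam

/-- Two distinct collectable `r`-patterns are harmonious if they have the same composition. -/
def Harmonious (r : ℕ) (P Q : Finset (Finset ℕ)) : Prop :=
  P ≠ Q ∧ Collectable r P ∧ Collectable r Q ∧
  ∃ lam : List ℕ, HasComposition r P lam ∧ HasComposition r Q lam

/-- A pair of distinct `r`-patterns is a mismatch if exactly one of them is collectable, or
both are collectable but their compositions differ. -/
def Mismatch (r : ℕ) (P Q : Finset (Finset ℕ)) : Prop :=
  P ≠ Q ∧
  ((Collectable r P ∧ ¬ Collectable r Q) ∨
   (¬ Collectable r P ∧ Collectable r Q) ∨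
   (Collectable r P ∧ Collectable r Q ∧
     ¬ ∃ lam : List ℕ, HasComposition r P lam ∧ HasComposition r Q lam))

/-- The trace of an ordered `r`-matching of size `k` on `[rk]`: the `j`-th letter equals
`i` when `j` is the `i`-th smallest element of the edge containing `j`. -/
noncomputable def trace (r k : ℕ) (M : Finset (Finset ℕ)) : List ℕ :=
  (List.range (r * k)).map (fun j₀ =>
    ((Finset.Icc 1 (r * k)).filter
      (fun x => x ≤ j₀ + 1 ∧ ∃ e ∈ M, j₀ + 1 ∈ e ∧ x ∈ e)).card)

/-- `a_Ps(k)`: the number of `Ps`-cliques of size `k` whose edges partition `[rk]`. -/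
noncomputable def cliqueCount (r : ℕ) (Ps : Set (Finset (Finset ℕ))) (k : ℕ) : ℕ :=
  (((Finset.Icc 1 (r * k)).powerset.powerset).filter
    (fun M => IsOrderedMatching r k M ∧ IsClique r Ps M)).card

/-- The maximum size of any `Ps`-clique whatsoever. -/
noncomputable def maxCliqueSize (r : ℕ) (Ps : Set (Finset (Finset ℕ))) : ℕ :=
  sSup {k | ∃ K : Finset (Finset ℕ), IsClique r Ps K ∧ K.card = k}

/-- `M` contains a copy of the ordered `r`-matching `H` of size `k`: a subfamily `N ⊆ M` of
`k` edges such that the order-preserving bijection from the union of the edges of `N`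
onto `[rk]` maps `N` onto `H`. -/
def ContainsCopy (r k : ℕ) (H M : Finset (Finset ℕ)) : Prop :=
  ∃ N ⊆ M, N.card = k ∧ ∃ φ : ℕ → ℕ,
    StrictMonoOn φ ↑(N.biUnion id) ∧
    (N.biUnion id).image φ = Finset.Icc 1 (r * k) ∧
    N.image (fun e => e.image φ) = H

/-- Delete the `j`-th smallest element of the finite set `e`. -/
def deleteJth (j : ℕ) (e : Finset ℕ) : Finset ℕ :=
  e.filter (fun x => (e.filter (· ≤ x)).card ≠ j)

/-- Relabel the elements of `e` order-preservingly by their ranks in `V`. -/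
def relabel (V : Finset ℕ) (e : Finset ℕ) : Finset ℕ :=
  e.image (fun x => (V.filter (· ≤ x)).card)

/-- `S^(−j)`: delete from each edge of the pattern `S` its `j`-th smallest element and
relabel the remaining vertices order-preservingly. -/
def patternDelete (j : ℕ) (S : Finset (Finset ℕ)) : Finset (Finset ℕ) :=
  (S.image (deleteJth j)).image (relabel ((S.image (deleteJth j)).biUnion id))

/-- The 2-pattern `AABB`. -/
def pAABB : Finset (Finset ℕ) := {{1, 2}, {3, 4}}
/-- The 2-pattern `ABBA`. -/
def pABBA : Finset (Finset ℕ) := {{1, 4}, {2, 3}}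

/-!
The edges of an `{AABB, ABBA}`-clique do not cross, and a noncrossing matching is determined by the
set of left ends and the set of right ends of its edges. Hence there are at most `(2n choose k)²`
candidates for a clique of size `k`, each contained in the random matching with probability at most
`n⁻ᵏ`, and the first moment method rules out cliques of size `C√n`.

Conversely, cut `[2n]` into order `√n` intervals. Edges lying inside distinct intervals pairwise
form `AABB`, so it suffices that many intervals contain an edge. For a fixed small set `O` of
intervals, reveal the partners of order `n` vertices one by one, always choosing a vertex in a
crowded interval outside `O`: each partner falls in the same interval with probability of order
`1/√n`, so all the edges inside intervals lie in `O` with probability at most `exp(-C√n)`. A union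
bound over the sets `O` finishes the argument.
-/

section PerfectMatchings

open scoped Nat

variable {α : Type*} {V : Finset α} {M K : Finset (Finset α)} {N : ℕ}

/-- A matching, as a family of pairwise disjoint two-element sets. Its vertex set is
`M.biUnion id`. -/
structure IsMatching (M : Finset (Finset α)) : Prop where
  card_eq_two : ∀ e ∈ M, #e = 2
  pairwiseDisjoint : (M : Set (Finset α)).PairwiseDisjoint id

namespace IsMatching

theorem mono (hM : IsMatching M) (hKM : K ⊆ M) : IsMatching K :=
  ⟨fun e he => hM.card_eq_two e (hKM he), hM.pairwiseDisjoint.subset (mod_cast hKM)⟩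

theorem eq_of_mem (hM : IsMatching M) {e f : Finset α} (he : e ∈ M) (hf : f ∈ M) {x : α}
    (hxe : x ∈ e) (hxf : x ∈ f) : e = f :=
  hM.pairwiseDisjoint.elim_finset he hf x hxe hxf

variable [DecidableEq α]

theorem right_unique (hM : IsMatching M) {x y y' : α} (hy : {x, y} ∈ M) (hy' : {x, y'} ∈ M) :
    y = y' := by
  have heq : ({x, y} : Finset α) = {x, y'} := hM.eq_of_mem (x := x) hy hy' (by simp) (by simp)
  have hne : y ≠ x := by
    rintro rfl
    simpa using hM.card_eq_two _ hy
  have hmem : y ∈ ({x, y'} : Finset α) := heq ▸ by simp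
  exact mem_singleton.1 (mem_of_mem_insert_of_ne hmem hne)

theorem left_unique (hM : IsMatching M) {x x' y : α} (hx : {x, y} ∈ M) (hx' : {x', y} ∈ M) :
    x = x' :=
  hM.right_unique (pair_comm x y ▸ hx) (pair_comm x' y ▸ hx')

theorem card_biUnion (hM : IsMatching M) : #(M.biUnion id) = 2 * #M := by
  rw [Finset.card_biUnion hM.pairwiseDisjoint]
  simp only [id]
  rw [Finset.sum_const_nat hM.card_eq_two, mul_comm]

theorem biUnion_sdiff (hM : IsMatching M) (hKM : K ⊆ M) :
    (M \ K).biUnion id = M.biUnion id \ K.biUnion id := by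
  ext x
  simp only [mem_biUnion, mem_sdiff, id]
  constructor
  · rintro ⟨e, ⟨heM, heK⟩, hxe⟩
    exact ⟨⟨e, heM, hxe⟩, fun ⟨f, hfK, hxf⟩ => heK (hM.eq_of_mem heM (hKM hfK) hxe hxf ▸ hfK)⟩
  · rintro ⟨⟨e, heM, hxe⟩, hx⟩
    exact ⟨e, ⟨heM, fun heK => hx ⟨e, heK, hxe⟩⟩, hxe⟩

theorem disjoint_of_disjoint_biUnion (hM : IsMatching M)
    (hKM : Disjoint (K.biUnion id) (M.biUnion id)) : Disjoint K M := by
  refine disjoint_left.2 fun e heK heM => ?_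
  obtain ⟨x, hx⟩ : e.Nonempty := card_pos.1 (by rw [hM.card_eq_two e heM]; exact two_pos)
  exact disjoint_left.1 hKM (mem_biUnion.2 ⟨e, heK, hx⟩) (mem_biUnion.2 ⟨e, heM, hx⟩)

theorem union (hK : IsMatching K) (hM : IsMatching M)
    (hKM : Disjoint (K.biUnion id) (M.biUnion id)) : IsMatching (K ∪ M) where
  card_eq_two e he := (mem_union.1 he).elim (hK.card_eq_two e) (hM.card_eq_two e)
  pairwiseDisjoint := by
    rw [coe_union]
    refine hK.pairwiseDisjoint.union hM.pairwiseDisjoint fun e he f hf _ => ?_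
    exact hKM.mono (subset_biUnion_of_mem id he) (subset_biUnion_of_mem id hf)

end IsMatching

variable [DecidableEq α]

theorem isMatching_singleton_pair {v w : α} (hvw : v ≠ w) : IsMatching {{v, w}} :=
  ⟨fun e he => by rw [mem_singleton.1 he, card_pair hvw], by simp⟩

/-- The matchings with vertex set `V`. -/
noncomputable def perfectMatchings (V : Finset α) : Finset (Finset (Finset α)) :=
  {M ∈ V.powerset.powerset | IsMatching M ∧ M.biUnion id = V}

theorem mem_perfectMatchings : M ∈ perfectMatchings V ↔ IsMatching M ∧ M.biUnion id = V := by
  refine mem_filter.trans (and_iff_right_of_imp fun hM => ?_)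
  exact mem_powerset.2 fun e he => mem_powerset.2 (hM.2 ▸ subset_biUnion_of_mem id he)

theorem isMatching_of_mem_perfectMatchings (hM : M ∈ perfectMatchings V) : IsMatching M :=
  (mem_perfectMatchings.1 hM).1

theorem subset_of_mem_perfectMatchings (hM : M ∈ perfectMatchings V) {e : Finset α}
    (he : e ∈ M) : e ⊆ V :=
  (mem_perfectMatchings.1 hM).2 ▸ subset_biUnion_of_mem id he

theorem card_of_mem_perfectMatchings (hM : M ∈ perfectMatchings V) : #V = 2 * #M := by
  rw [← (mem_perfectMatchings.1 hM).2, (isMatching_of_mem_perfectMatchings hM).card_biUnion]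

theorem sdiff_mem_perfectMatchings (hM : M ∈ perfectMatchings V) (hKM : K ⊆ M) :
    M \ K ∈ perfectMatchings (V \ K.biUnion id) := by
  obtain ⟨hmatch, rfl⟩ := mem_perfectMatchings.1 hM
  exact mem_perfectMatchings.2 ⟨hmatch.mono sdiff_subset, hmatch.biUnion_sdiff hKM⟩

theorem union_mem_perfectMatchings (hK : IsMatching K) (hKV : K.biUnion id ⊆ V)
    (hM : M ∈ perfectMatchings (V \ K.biUnion id)) : K ∪ M ∈ perfectMatchings V := by
  obtain ⟨hM, hMV⟩ := mem_perfectMatchings.1 hM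
  refine mem_perfectMatchings.2 ⟨hK.union hM (hMV ▸ disjoint_sdiff), ?_⟩
  rw [union_biUnion, hMV, union_sdiff_of_subset hKV]

theorem card_filter_subset_and_perfectMatchings (hK : IsMatching K) (hKV : K.biUnion id ⊆ V)
    (A : Finset (Finset α) → Prop) [DecidablePred A] :
    #{M ∈ perfectMatchings V | K ⊆ M ∧ A M} =
      #{M ∈ perfectMatchings (V \ K.biUnion id) | A (K ∪ M)} := by
  refine card_nbij' (· \ K) (K ∪ ·) ?_ ?_ ?_ ?_
  · intro M hM
    obtain ⟨hMV, hKM, hA⟩ := mem_filter.1 hM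
    exact mem_filter.2 ⟨sdiff_mem_perfectMatchings hMV hKM, by rwa [union_sdiff_of_subset hKM]⟩
  · intro M hM
    obtain ⟨hMV, hA⟩ := mem_filter.1 hM
    exact mem_filter.2 ⟨union_mem_perfectMatchings hK hKV hMV, subset_union_left, hA⟩
  · intro M hM
    exact union_sdiff_of_subset (mem_filter.1 hM).2.1
  · intro M hM
    obtain ⟨hM, hMV⟩ := mem_perfectMatchings.1 (mem_filter.1 hM).1
    exact union_sdiff_cancel_left (hM.disjoint_of_disjoint_biUnion (hMV ▸ disjoint_sdiff))

theorem exists_pair_mem_of_mem_perfectMatchings (hM : M ∈ perfectMatchings V) {v : α}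
    (hv : v ∈ V) : ∃ w ∈ V.erase v, {v, w} ∈ M := by
  obtain ⟨hmatch, hMV⟩ := mem_perfectMatchings.1 hM
  obtain ⟨e, he, hve⟩ := mem_biUnion.1 (hMV.symm ▸ hv)
  rw [id] at hve
  have hcard : #(e.erase v) = 1 := by rw [card_erase_of_mem hve, hmatch.card_eq_two e he]
  obtain ⟨w, hw⟩ := card_eq_one.1 hcard
  have hwe : w ∈ e.erase v := hw ▸ mem_singleton_self w
  refine ⟨w, erase_subset_erase v (subset_of_mem_perfectMatchings hM he) hwe, ?_⟩
  rwa [← hw, insert_erase hve]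

theorem card_filter_perfectMatchings {v : α} (hv : v ∈ V) (A : Finset (Finset α) → Prop)
    [DecidablePred A] :
    #{M ∈ perfectMatchings V | A M} =
      ∑ w ∈ V.erase v, #{M ∈ perfectMatchings (V \ {v, w}) | A (insert {v, w} M)} := by
  have hpartition : {M ∈ perfectMatchings V | A M} = (V.erase v).biUnion
      fun w => {M ∈ perfectMatchings V | {{v, w}} ⊆ M ∧ A M} := by
    ext M
    simp only [mem_filter, mem_biUnion, singleton_subset_iff]
    constructor
    · rintro ⟨hM, hA⟩
      obtain ⟨w, hw, hvw⟩ := exists_pair_mem_of_mem_perfectMatchings hM hv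
      exact ⟨w, hw, hM, hvw, hA⟩
    · rintro ⟨w, -, hM, -, hA⟩
      exact ⟨hM, hA⟩
  rw [hpartition, card_biUnion]
  · refine sum_congr rfl fun w hw => ?_
    obtain ⟨hwv, hwV⟩ := mem_erase.1 hw
    have hsub : ({{v, w}} : Finset (Finset α)).biUnion id ⊆ V := by
      simp [insert_subset_iff, hv, hwV]
    simpa only [singleton_biUnion, id, ← insert_eq] using
      card_filter_subset_and_perfectMatchings (isMatching_singleton_pair hwv.symm) hsub A
  · intro w _ w' _ hww'
    refine disjoint_left.2 fun M hM hM' => hww' ?_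
    obtain ⟨hMV, hvw, -⟩ := mem_filter.1 hM
    have hvw' := (mem_filter.1 hM').2.1
    exact (isMatching_of_mem_perfectMatchings hMV).right_unique (singleton_subset_iff.1 hvw)
      (singleton_subset_iff.1 hvw')

theorem card_sdiff_pair {v w : α} (hv : v ∈ V) (hw : w ∈ V.erase v) :
    #(V \ {v, w}) = #V - 2 := by
  obtain ⟨hwv, hwV⟩ := mem_erase.1 hw
  rw [card_sdiff_of_subset (by simp [insert_subset_iff, hv, hwV]), card_pair hwv.symm]

theorem perfectMatchings_empty : perfectMatchings (∅ : Finset α) = {∅} := by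
  ext M
  rw [mem_singleton]
  constructor
  · intro hM
    simpa using card_of_mem_perfectMatchings hM
  · rintro rfl
    exact mem_perfectMatchings.2 ⟨⟨by simp, by simp⟩, rfl⟩

theorem card_perfectMatchings (hV : #V = 2 * N) : #(perfectMatchings V) = (2 * N - 1)‼ := by
  induction N generalizing V with
  | zero =>
    obtain rfl : V = ∅ := by simpa using hV
    simp [perfectMatchings_empty]
  | succ N ih =>
    obtain ⟨v, hv⟩ : V.Nonempty := card_pos.1 (by lia)
    have hrec := card_filter_perfectMatchings hv (fun _ => True)
    simp only [filter_true] at hrec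
    have hterm (w : α) (hw : w ∈ V.erase v) : #(perfectMatchings (V \ {v, w})) = (2 * N - 1)‼ :=
      ih (by rw [card_sdiff_pair hv hw]; lia)
    rw [hrec, sum_const_nat hterm, card_erase_of_mem hv, hV]
    exact (Nat.doubleFactorial_add_one (2 * N)).symm

theorem card_filter_superset_perfectMatchings (hV : #V = 2 * N) (hK : IsMatching K)
    (hKV : K.biUnion id ⊆ V) :
    #{M ∈ perfectMatchings V | K ⊆ M} = (2 * (N - #K) - 1)‼ := by
  have hcard : #(V \ K.biUnion id) = 2 * (N - #K) := by
    rw [card_sdiff_of_subset hKV, hV, hK.card_biUnion, Nat.mul_sub]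
  simpa [card_perfectMatchings hcard] using
    card_filter_subset_and_perfectMatchings hK hKV (fun _ => True)

theorem pow_mul_doubleFactorial_le {n k : ℕ} (hk : 2 * k ≤ n) :
    n ^ k * (2 * (n - k) - 1)‼ ≤ (2 * n - 1)‼ := by
  obtain ⟨N, rfl⟩ := Nat.exists_eq_add_of_le' (show k ≤ n by lia)
  have hfactor (i : ℕ) : (N + k) ^ i * (2 * N - 1)‼ ≤ (2 * (N + i) - 1)‼ := by
    induction i with
    | zero => simp
    | succ i ih =>
      calc (N + k) ^ (i + 1) * (2 * N - 1)‼ = (N + k) * ((N + k) ^ i * (2 * N - 1)‼) := by ring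
        _ ≤ (2 * (N + i) + 1) * (2 * (N + i) - 1)‼ := Nat.mul_le_mul (by lia) ih
        _ = (2 * (N + (i + 1)) - 1)‼ := (Nat.doubleFactorial_add_one (2 * (N + i))).symm
  simpa using hfactor k

end PerfectMatchings

section NoncrossingMatchings

open scoped Nat

variable {α : Type*} {e : Finset α} {K K' : Finset (Finset α)}

section Endpoints

variable [DecidableEq α]

theorem exists_rel_pair_of_card_eq_two (R : α → α → Prop) [Std.Trichotomous R] (he : #e = 2) :
    ∃ x y, R x y ∧ e = {x, y} := by
  obtain ⟨x, y, hxy, rfl⟩ := card_eq_two.1 he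
  obtain h | h | h := trichotomous_of R x y
  · exact ⟨x, y, h, rfl⟩
  · exact absurd h hxy
  · exact ⟨y, x, h, pair_comm x y⟩

/-- The set of first coordinates of the edges of a matching, each edge being ordered by `R`: the
left ends of the edges when `R` is `<`, and their right ends when `R` is `>`. -/
noncomputable def endpoints (R : α → α → Prop) (K : Finset (Finset α)) : Finset α :=
  K.biUnion fun e => {x ∈ e | ∃ y ∈ e, R x y}

variable {R : α → α → Prop}

theorem endpoints_subset : endpoints R K ⊆ K.biUnion id :=
  biUnion_mono fun _ _ => filter_subset _ _

theorem mem_endpoints [Std.Asymm R] (hK : IsMatching K) {x : α} :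
    x ∈ endpoints R K ↔ ∃ y, R x y ∧ {x, y} ∈ K := by
  simp only [endpoints, mem_biUnion, mem_filter]
  constructor
  · rintro ⟨e, he, hx, y, hy, hxy⟩
    have hpair : #({x, y} : Finset α) = 2 := card_pair (ne_of_irrefl hxy)
    have heq : {x, y} = e := eq_of_subset_of_card_le (by simp [insert_subset_iff, hx, hy])
      (by rw [hpair, hK.card_eq_two e he])
    exact ⟨y, hxy, heq ▸ he⟩
  · rintro ⟨y, hxy, he⟩
    exact ⟨_, he, by simp, y, by simp, hxy⟩

theorem card_endpoints [Std.Trichotomous R] [Std.Asymm R] (hK : IsMatching K) :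
    #(endpoints R K) = #K := by
  have hdisjoint : (K : Set (Finset α)).PairwiseDisjoint fun e => {x ∈ e | ∃ y ∈ e, R x y} :=
    hK.pairwiseDisjoint.mono fun e => filter_subset _ e
  rw [endpoints, card_biUnion hdisjoint, card_eq_sum_ones]
  refine sum_congr rfl fun e he => ?_
  obtain ⟨x, y, hxy, rfl⟩ := exists_rel_pair_of_card_eq_two R (hK.card_eq_two e he)
  refine card_eq_one.2 ⟨x, ?_⟩
  simp [filter_insert, filter_singleton, hxy, irrefl_of R, asymm_of R hxy]

end Endpoints

variable [LinearOrder α]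

/-- A family of pairs is noncrossing if no two of its members `{a, c}` and `{b, d}` interleave
as `a < b < c < d`. -/
def IsNoncrossing (K : Finset (Finset α)) : Prop :=
  ∀ ⦃a b c d⦄, a < b → b < c → c < d → {a, c} ∈ K → {b, d} ∉ K

theorem IsNoncrossing.right_end_le (hK' : IsMatching K') (hnc : IsNoncrossing K')
    (hK : IsMatching K) (hright : endpoints (· > ·) K = endpoints (· > ·) K') {x y y' : α}
    (hagree : ∀ z > x, ∀ w > z, {z, w} ∈ K' → {z, w} ∈ K)
    (hxy : x < y) (hy : {x, y} ∈ K) (hy' : {x, y'} ∈ K') : y' ≤ y := by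
  by_contra! hlt
  have hyR : y ∈ endpoints (· > ·) K' :=
    hright ▸ (mem_endpoints hK).2 ⟨x, hxy, pair_comm x y ▸ hy⟩
  obtain ⟨z, hzy, hz⟩ := (mem_endpoints hK').1 hyR
  rw [pair_comm] at hz
  obtain hzx | rfl | hxz := lt_trichotomy z x
  · exact hnc hzx hxy hlt hz hy'
  · exact hlt.ne (hK'.right_unique hz hy')
  · exact hxz.ne (hK.left_unique hy (hagree z hxz y hzy hz))

-- Compare the two matchings at the largest left end where they differ.
theorem IsNoncrossing.eq_of_endpoints_eq (hK : IsMatching K) (hK' : IsMatching K')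
    (hnc : IsNoncrossing K) (hnc' : IsNoncrossing K')
    (hleft : endpoints (· < ·) K = endpoints (· < ·) K')
    (hright : endpoints (· > ·) K = endpoints (· > ·) K') : K = K' := by
  have hagree : ∀ x y, x < y → ({x, y} ∈ K ↔ {x, y} ∈ K') := by
    by_contra! hdiff
    let D : Finset α := {x ∈ endpoints (· < ·) K | ∃ y > x, ¬({x, y} ∈ K ↔ {x, y} ∈ K')}
    have hD (x y : α) (hxy : x < y) (h : ¬({x, y} ∈ K ↔ {x, y} ∈ K')) : x ∈ D := by
      refine mem_filter.2 ⟨?_, y, hxy, h⟩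
      by_cases hy : {x, y} ∈ K
      · exact (mem_endpoints hK).2 ⟨y, hxy, hy⟩
      · exact hleft ▸ (mem_endpoints hK').2 ⟨y, hxy, by tauto⟩
    obtain ⟨x₀, y₀, hxy₀, h₀⟩ := hdiff
    obtain ⟨x, hxD, hmax⟩ := exists_max_image D id ⟨x₀, hD x₀ y₀ hxy₀ (by tauto)⟩
    have habove (z : α) (hz : z > x) (w : α) (hw : w > z) : {z, w} ∈ K ↔ {z, w} ∈ K' := by
      by_contra h
      exact (hmax z (hD z w hw h)).not_gt hz
    obtain ⟨hxL, w, -, hdiff⟩ := mem_filter.1 hxD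
    obtain ⟨y, hxy, hy⟩ := (mem_endpoints hK).1 hxL
    obtain ⟨y', hxy', hy'⟩ := (mem_endpoints hK').1 (hleft ▸ hxL)
    obtain rfl : y = y' := le_antisymm
      (hnc.right_end_le hK hK' hright.symm (fun z hz w hw => (habove z hz w hw).1) hxy' hy' hy)
      (hnc'.right_end_le hK' hK hright (fun z hz w hw => (habove z hz w hw).2) hxy hy hy')
    exact hdiff ⟨fun hw => hK.right_unique hy hw ▸ hy', fun hw => hK'.right_unique hy' hw ▸ hy⟩
  have hsubset {L L' : Finset (Finset α)} (hL : IsMatching L)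
      (h : ∀ x y, x < y → {x, y} ∈ L → {x, y} ∈ L') : L ⊆ L' := by
    intro e he
    obtain ⟨x, y, hxy, rfl⟩ := exists_rel_pair_of_card_eq_two (· < ·) (hL.card_eq_two e he)
    exact h x y hxy he
  exact (hsubset hK fun x y hxy => (hagree x y hxy).1).antisymm
    (hsubset hK' fun x y hxy => (hagree x y hxy).2)

/-- The noncrossing matchings with `k` edges whose vertices lie in `V`. -/
noncomputable def noncrossingMatchings (V : Finset α) (k : ℕ) : Finset (Finset (Finset α)) :=
  {K ∈ (V.powersetCard 2).powersetCard k | IsMatching K ∧ IsNoncrossing K}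

variable {V : Finset α} {n k : ℕ}

theorem mem_noncrossingMatchings : K ∈ noncrossingMatchings V k ↔
    IsMatching K ∧ IsNoncrossing K ∧ K.biUnion id ⊆ V ∧ #K = k := by
  simp only [noncrossingMatchings, mem_filter, mem_powersetCard, biUnion_subset, id]
  constructor
  · rintro ⟨⟨hKV, hcard⟩, hK, hnc⟩
    exact ⟨hK, hnc, fun e he => (mem_powersetCard.1 (hKV he)).1, hcard⟩
  · rintro ⟨hK, hnc, hKV, hcard⟩
    exact ⟨⟨fun e he => mem_powersetCard.2 ⟨hKV e he, hK.card_eq_two e he⟩, hcard⟩, hK, hnc⟩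

theorem card_noncrossingMatchings_le (V : Finset α) (k : ℕ) :
    #(noncrossingMatchings V k) ≤ (#V).choose k ^ 2 := by
  rw [sq, ← card_powersetCard, ← card_product]
  refine card_le_card_of_injOn (fun K => (endpoints (· < ·) K, endpoints (· > ·) K)) ?_ ?_
  · intro K hK
    obtain ⟨hmatch, -, hKV, hcard⟩ := mem_noncrossingMatchings.1 hK
    simp only [coe_product, Set.mem_prod, mem_coe, mem_powersetCard, card_endpoints hmatch, hcard,
      and_true]
    exact ⟨endpoints_subset.trans hKV, endpoints_subset.trans hKV⟩
  · intro K hK K' hK' heq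
    obtain ⟨hmatch, hnc, -⟩ := mem_noncrossingMatchings.1 hK
    obtain ⟨hmatch', hnc', -⟩ := mem_noncrossingMatchings.1 hK'
    obtain ⟨hleft, hright⟩ := Prod.mk.inj heq
    exact hnc.eq_of_endpoints_eq hmatch hmatch' hnc' hleft hright

theorem card_filter_exists_noncrossing_le_choose (hV : #V = 2 * n) (k : ℕ) :
    #{M ∈ perfectMatchings V | ∃ K ⊆ M, IsNoncrossing K ∧ #K = k} ≤
      (2 * n).choose k ^ 2 * (2 * (n - k) - 1)‼ := by
  have hcover : {M ∈ perfectMatchings V | ∃ K ⊆ M, IsNoncrossing K ∧ #K = k} ⊆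
      (noncrossingMatchings V k).biUnion fun K => {M ∈ perfectMatchings V | K ⊆ M} := by
    intro M hM
    obtain ⟨hM, K, hKM, hnc, hcard⟩ := mem_filter.1 hM
    have hKV : K.biUnion id ⊆ V :=
      biUnion_subset.2 fun e he => subset_of_mem_perfectMatchings hM (hKM he)
    have hK := (isMatching_of_mem_perfectMatchings hM).mono hKM
    exact mem_biUnion.2 ⟨K, mem_noncrossingMatchings.2 ⟨hK, hnc, hKV, hcard⟩,
      mem_filter.2 ⟨hM, hKM⟩⟩
  calc _ ≤ _ := card_le_card hcover
    _ ≤ #(noncrossingMatchings V k) * (2 * (n - k) - 1)‼ := by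
      refine card_biUnion_le_card_mul _ _ _ fun K hK => ?_
      obtain ⟨hmatch, -, hKV, hcard⟩ := mem_noncrossingMatchings.1 hK
      rw [card_filter_superset_perfectMatchings hV hmatch hKV, hcard]
    _ ≤ _ := by
      gcongr
      exact hV ▸ card_noncrossingMatchings_le V k

theorem div_exp_one_pow_le_factorial (k : ℕ) : (k / Real.exp 1 : ℝ) ^ k ≤ k ! := by
  have h := Real.pow_div_factorial_le_exp k (Nat.cast_nonneg k) k
  rw [div_le_iff₀ (by positivity)] at h
  rwa [div_pow, Real.exp_one_pow, div_le_iff₀' (Real.exp_pos _)]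

theorem card_filter_exists_noncrossing_le (hV : #V = 2 * n) (hk : 2 * k ≤ n) :
    (#{M ∈ perfectMatchings V | ∃ K ⊆ M, IsNoncrossing K ∧ #K = k} : ℝ) ≤
      (4 * Real.exp 1 ^ 2 * n / k ^ 2) ^ k * (2 * n - 1)‼ := by
  obtain rfl | hk0 := Nat.eq_zero_or_pos k
  · have hle : #{M ∈ perfectMatchings V | ∃ K ⊆ M, IsNoncrossing K ∧ #K = 0} ≤ (2 * n - 1)‼ :=
      (card_filter_le _ _).trans_eq (card_perfectMatchings hV)
    rw [pow_zero, one_mul]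
    exact_mod_cast hle
  have hn : 0 < n := by lia
  have hchoose : ((2 * n).choose k : ℝ) ≤ (2 * n / (k / Real.exp 1)) ^ k := by
    calc ((2 * n).choose k : ℝ) ≤ ((2 * n : ℕ) : ℝ) ^ k / k ! := Nat.choose_le_pow_div k (2 * n)
      _ ≤ (2 * n) ^ k / (k / Real.exp 1) ^ k := by
        push_cast
        gcongr
        exact div_exp_one_pow_le_factorial k
      _ = _ := (div_pow _ _ _).symm
  have hratio : ((2 * (n - k) - 1)‼ : ℝ) ≤ (2 * n - 1)‼ / n ^ k := by
    rw [le_div_iff₀' (by positivity)]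
    exact_mod_cast pow_mul_doubleFactorial_le hk
  calc (#{M ∈ perfectMatchings V | ∃ K ⊆ M, IsNoncrossing K ∧ #K = k} : ℝ)
      ≤ (2 * n).choose k ^ 2 * (2 * (n - k) - 1)‼ :=
        mod_cast card_filter_exists_noncrossing_le_choose hV k
    _ ≤ ((2 * n / (k / Real.exp 1)) ^ k) ^ 2 * ((2 * n - 1)‼ / n ^ k) := by gcongr
    _ = ((2 * n / (k / Real.exp 1)) ^ 2 / n) ^ k * (2 * n - 1)‼ := by
      rw [pow_right_comm, div_pow _ (n : ℝ)]
      ring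
    _ = (4 * Real.exp 1 ^ 2 * n / k ^ 2) ^ k * (2 * n - 1)‼ := by
      congr 2
      field_simp
      ring

end NoncrossingMatchings

section MonochromaticEdges

open scoped Nat

variable {α β : Type*} [DecidableEq β] {V : Finset α} {M : Finset (Finset α)}
  {c : α → β} {O T : Finset β} {N j k q s : ℕ} {p : ℝ}

theorem exists_lt_card_color_class (hT : ∀ x ∈ V, c x ∈ T) (hq : #T * q < #{x ∈ V | c x ∉ O}) :
    ∃ v ∈ V, c v ∉ O ∧ q < #{w ∈ V | c w = c v} := by
  obtain ⟨b, -, hb⟩ := exists_lt_card_fiber_of_mul_lt_card_of_maps_to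
    (fun x hx => hT x (mem_filter.1 hx).1) hq
  obtain ⟨v, hv⟩ := card_pos.1 (pos_of_gt hb)
  obtain ⟨hvU, rfl⟩ := mem_filter.1 hv
  obtain ⟨hvV, hvO⟩ := mem_filter.1 hvU
  exact ⟨v, hvV, hvO,
    hb.trans_le (card_le_card (filter_subset_filter _ (filter_subset _ _)))⟩

variable [DecidableEq α]

/-- The colours of the monochromatic edges of `M`, for a colouring `c` of the vertices. -/
def monochromaticColors (c : α → β) (M : Finset (Finset α)) : Finset β :=
  {b ∈ (M.biUnion id).image c | ∃ e ∈ M, e.image c = {b}}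

theorem mem_monochromaticColors {b : β} :
    b ∈ monochromaticColors c M ↔ ∃ e ∈ M, e.image c = {b} := by
  refine mem_filter.trans (and_iff_right_of_imp ?_)
  rintro ⟨e, he, heb⟩
  exact image_subset_image (subset_biUnion_of_mem id he) (heb ▸ mem_singleton_self b)

theorem monochromaticColors_insert_pair_subset_iff {v w : α} :
    monochromaticColors c (insert {v, w} M) ⊆ O ↔
      (c w = c v → c v ∈ O) ∧ monochromaticColors c M ⊆ O := by
  simp only [subset_iff, mem_monochromaticColors, exists_mem_insert, or_imp, forall_and]
  refine and_congr_left fun _ => ⟨fun h hcwv => h _ (by simp [image_insert, hcwv]),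
    fun h b hb => ?_⟩
  have hv : c v = b := mem_singleton.1 (hb ▸ mem_image_of_mem c (mem_insert_self v {w}))
  have hw : c w = b := mem_singleton.1 (hb ▸ mem_image_of_mem c (by simp))
  exact hv ▸ h (hw.trans hv.symm)

theorem monochromaticColors_subset (hM : M ∈ perfectMatchings V) (hT : ∀ x ∈ V, c x ∈ T) :
    monochromaticColors c M ⊆ T := by
  refine (filter_subset _ _).trans (image_subset_iff.2 fun x hx => hT x ?_)
  rwa [(mem_perfectMatchings.1 hM).2] at hx

theorem card_filter_monochromaticColors_subset_le_mul {v : α} {B : ℝ} (hv : v ∈ V) (hvO : c v ∉ O)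
    (hB : ∀ w ∈ V, c w ≠ c v →
      (#{M ∈ perfectMatchings (V \ {v, w}) | monochromaticColors c M ⊆ O} : ℝ) ≤ B) :
    (#{M ∈ perfectMatchings V | monochromaticColors c M ⊆ O} : ℝ) ≤ #{w ∈ V | c w ≠ c v} * B := by
  have hsubset : {w ∈ V | c w ≠ c v} ⊆ V.erase v := by
    intro w hw
    obtain ⟨hwV, hwv⟩ := mem_filter.1 hw
    exact mem_erase.2 ⟨ne_of_apply_ne c hwv, hwV⟩
  rw [card_filter_perfectMatchings hv, ← sum_subset hsubset, Nat.cast_sum, ← nsmul_eq_mul]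
  · refine sum_le_card_nsmul _ _ _ fun w hw => ?_
    obtain ⟨hwV, hwv⟩ := mem_filter.1 hw
    simpa only [monochromaticColors_insert_pair_subset_iff, hwv, false_imp_iff, true_and]
      using hB w hwV hwv
  · intro w hw hwv
    have hcwv : c w = c v := by
      by_contra h
      exact hwv (mem_filter.2 ⟨mem_of_mem_erase hw, h⟩)
    simp [monochromaticColors_insert_pair_subset_iff, hcwv, hvO]

theorem card_filter_le_card_filter_sdiff_pair_add_two (P : α → Prop) [DecidablePred P] (v w : α) :
    #{x ∈ V | P x} ≤ #{x ∈ V \ {v, w} | P x} + 2 := by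
  have heq : {x ∈ V \ {v, w} | P x} = {x ∈ V | P x} \ {v, w} := by
    ext x
    simp only [mem_filter, mem_sdiff]
    tauto
  rw [heq]
  exact card_le_card_sdiff_add_card.trans (by gcongr; exact card_le_two)

-- Match the vertices one at a time, always taking one from a colour class outside `O` of size more
-- than `q`: it avoids a partner of its own colour with conditional probability at most `1 - p`.
theorem card_filter_monochromaticColors_subset_le (hV : #V = 2 * N) (hT : ∀ x ∈ V, c x ∈ T)
    (hp0 : 0 ≤ p) (hp1 : p ≤ 1) (hpq : p * #V ≤ q) (hj : #T * q + 2 * j ≤ #{x ∈ V | c x ∉ O}) :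
    (#{M ∈ perfectMatchings V | monochromaticColors c M ⊆ O} : ℝ) ≤
      (1 - p) ^ j * (2 * N - 1)‼ := by
  induction j generalizing V N with
  | zero =>
    rw [pow_zero, one_mul, ← card_perfectMatchings hV]
    exact_mod_cast card_filter_le _ _
  | succ j ih =>
    obtain ⟨v, hvV, hvO, hclass⟩ := exists_lt_card_color_class hT
      (show #T * q < #{x ∈ V | c x ∉ O} by lia)
    obtain ⟨N, rfl⟩ : ∃ N', N = N' + 1 :=
      Nat.exists_eq_succ_of_ne_zero (by have := card_pos.2 ⟨v, hvV⟩; lia)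
    have hsplit := card_filter_add_card_filter_not (s := V) (fun w => c w = c v)
    have hcount : (#{w ∈ V | c w ≠ c v} : ℝ) ≤ (1 - p) * (2 * N + 1) := by
      have hle : (#{w ∈ V | c w ≠ c v} + q : ℝ) ≤ 2 * N + 1 := by
        norm_cast
        lia
      rw [hV] at hpq
      push_cast at hpq
      linarith
    have hrest (w : α) (hw : w ∈ V) (hwv : c w ≠ c v) :
        (#{M ∈ perfectMatchings (V \ {v, w}) | monochromaticColors c M ⊆ O} : ℝ) ≤
          (1 - p) ^ j * (2 * N - 1)‼ := by
      have hcard := card_sdiff_pair hvV (mem_erase.2 ⟨ne_of_apply_ne c hwv, hw⟩)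
      refine ih (by lia) (fun x hx => hT x (mem_sdiff.1 hx).1) (hpq.trans' ?_) ?_
      · gcongr
        exact sdiff_subset
      · have := card_filter_le_card_filter_sdiff_pair_add_two (V := V) (c · ∉ O) v w
        lia
    calc _ ≤ #{w ∈ V | c w ≠ c v} * ((1 - p) ^ j * (2 * N - 1)‼ : ℝ) :=
          card_filter_monochromaticColors_subset_le_mul hvV hvO hrest
      _ ≤ (1 - p) * (2 * N + 1) * ((1 - p) ^ j * (2 * N - 1)‼) := by gcongr
      _ = (1 - p) ^ (j + 1) * (2 * (N + 1) - 1)‼ := by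
        rw [show 2 * (N + 1) - 1 = 2 * N + 1 by lia, Nat.doubleFactorial_add_one]
        push_cast
        ring

theorem card_filter_card_monochromaticColors_lt_le (hV : #V = 2 * N) (hT : ∀ x ∈ V, c x ∈ T)
    (hs : ∀ b ∈ T, #{x ∈ V | c x = b} ≤ s) (hp0 : 0 ≤ p) (hp1 : p ≤ 1) (hpq : p * #V ≤ q)
    (hj : #T * q + 2 * j + k * s ≤ #V) :
    (#{M ∈ perfectMatchings V | #(monochromaticColors c M) < k} : ℝ) ≤
      2 ^ #T * ((1 - p) ^ j * (2 * N - 1)‼) := by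
  have hcover : {M ∈ perfectMatchings V | #(monochromaticColors c M) < k} ⊆
      {O ∈ T.powerset | #O < k}.biUnion
        fun O => {M ∈ perfectMatchings V | monochromaticColors c M ⊆ O} := by
    intro M hM
    obtain ⟨hM, hlt⟩ := mem_filter.1 hM
    exact mem_biUnion.2 ⟨_, mem_filter.2 ⟨mem_powerset.2 (monochromaticColors_subset hM hT), hlt⟩,
      mem_filter.2 ⟨hM, Subset.rfl⟩⟩
  have hfibre (O : Finset β) (hO : O ∈ {O ∈ T.powerset | #O < k}) :
      (#{M ∈ perfectMatchings V | monochromaticColors c M ⊆ O} : ℝ) ≤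
        (1 - p) ^ j * (2 * N - 1)‼ := by
    obtain ⟨hOT, hOk⟩ := mem_filter.1 hO
    have hcoloured : #{x ∈ V | c x ∈ O} ≤ s * #O := by
      refine card_le_mul_card_image_of_maps_to (f := c) (fun x hx => (mem_filter.1 hx).2) s ?_
      exact fun b hb => (card_le_card (filter_subset_filter _ (filter_subset _ _))).trans
        (hs b (mem_powerset.1 hOT hb))
    have hsplit := card_filter_add_card_filter_not (s := V) (fun x => c x ∈ O)
    have hmul : s * #O ≤ k * s := by
      rw [mul_comm]
      gcongr
    exact card_filter_monochromaticColors_subset_le hV hT hp0 hp1 hpq (by lia)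
  calc _ ≤ ∑ O ∈ T.powerset with #O < k,
        (#{M ∈ perfectMatchings V | monochromaticColors c M ⊆ O} : ℝ) :=
        mod_cast (card_le_card hcover).trans card_biUnion_le
    _ ≤ #{O ∈ T.powerset | #O < k} * ((1 - p) ^ j * (2 * N - 1)‼ : ℝ) := by
      rw [← nsmul_eq_mul]
      exact sum_le_card_nsmul _ _ _ hfibre
    _ ≤ 2 ^ #T * ((1 - p) ^ j * (2 * N - 1)‼) := by
      have hcard : #{O ∈ T.powerset | #O < k} ≤ 2 ^ #T :=
        (card_filter_le _ _).trans_eq (card_powerset T)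
      gcongr
      exact_mod_cast hcard

end MonochromaticEdges

section Cliques

variable {r k : ℕ} {Ps : Set (Finset (Finset ℕ))} {P K K' M : Finset (Finset ℕ)} {e f : Finset ℕ}

theorem FormsPattern.symm (h : FormsPattern r e f P) : FormsPattern r f e P := by
  obtain ⟨φ, hmono, himage, hP⟩ := h
  rw [union_comm] at hmono himage
  exact ⟨φ, hmono, himage, pair_comm (e.image φ) _ ▸ hP⟩

theorem formsPattern_pAABB {a b c d : ℕ} (hab : a < b) (hbc : b < c) (hcd : c < d) :
    FormsPattern 2 {a, b} {c, d} pAABB := by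
  let φ (x : ℕ) : ℕ := if x ≤ a then 1 else if x ≤ b then 2 else if x ≤ c then 3 else 4
  have ha : φ a = 1 := by grind
  have hb : φ b = 2 := by grind
  have hc : φ c = 3 := by grind
  have hd : φ d = 4 := by grind
  refine ⟨φ, ?_, ?_, ?_⟩
  · intro x hx y hy hxy
    simp only [coe_union, coe_insert, coe_singleton, Set.mem_union, Set.mem_insert_iff,
      Set.mem_singleton_iff] at hx hy
    obtain (rfl | rfl) | rfl | rfl := hx <;> obtain (rfl | rfl) | rfl | rfl := hy <;> lia
  · rw [image_union]
    simp only [image_insert, image_singleton, ha, hb, hc, hd]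
    decide
  · simp only [image_insert, image_singleton, ha, hb, hc, hd, pAABB]

theorem formsPattern_pAABB_of_forall_lt (he : #e = 2) (hf : #f = 2)
    (h : ∀ x ∈ e, ∀ y ∈ f, x < y) : FormsPattern 2 e f pAABB := by
  obtain ⟨a, b, hab, rfl⟩ := exists_rel_pair_of_card_eq_two (· < ·) he
  obtain ⟨c, d, hcd, rfl⟩ := exists_rel_pair_of_card_eq_two (· < ·) hf
  exact formsPattern_pAABB hab (h b (by simp) c (by simp)) hcd

theorem FormsPattern.eq_of_interleaving {a b c d : ℕ} (hab : a < b) (hbc : b < c) (hcd : c < d)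
    (h : FormsPattern 2 {a, c} {b, d} P) : P = {{1, 3}, {2, 4}} := by
  obtain ⟨φ, hmono, himage, rfl⟩ := h
  have hmem {x : ℕ} (hx : x ∈ ({a, c} ∪ {b, d} : Finset ℕ)) : φ x ∈ Icc 1 4 :=
    himage ▸ mem_image_of_mem φ hx
  have ha := (mem_Icc.1 (hmem (x := a) (by simp))).1
  have hd := (mem_Icc.1 (hmem (x := d) (by simp))).2
  have hφab : φ a < φ b := hmono (by simp) (by simp) hab
  have hφbc : φ b < φ c := hmono (by simp) (by simp) hbc
  have hφcd : φ c < φ d := hmono (by simp) (by simp) hcd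
  obtain ⟨ha, hb, hc, hd⟩ : φ a = 1 ∧ φ b = 2 ∧ φ c = 3 ∧ φ d = 4 := by lia
  simp only [image_insert, image_singleton, ha, hb, hc, hd]

theorem IsNoncrossing.mono (hK : IsNoncrossing K) (hK' : K' ⊆ K) : IsNoncrossing K' :=
  fun _ _ _ _ hab hbc hcd hac hbd => hK hab hbc hcd (hK' hac) (hK' hbd)

theorem IsClique.isNoncrossing (hK : IsClique 2 {pAABB, pABBA} K) : IsNoncrossing K := by
  intro a b c d hab hbc hcd hac hbd
  have hne : ({a, c} : Finset ℕ) ≠ {b, d} := by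
    intro heq
    have ha : a ∈ ({b, d} : Finset ℕ) := heq ▸ mem_insert_self a {c}
    rw [mem_insert, mem_singleton] at ha
    lia
  obtain ⟨P, hP, hform⟩ := hK.2.2 _ hac _ hbd hne
  obtain rfl := hform.eq_of_interleaving hab hbc hcd
  revert hP
  simp only [Set.mem_insert_iff, Set.mem_singleton_iff]
  decide

theorem bddAbove_card_isClique (r : ℕ) (Ps : Set (Finset (Finset ℕ))) (M : Finset (Finset ℕ)) :
    BddAbove {k | ∃ K ⊆ M, IsClique r Ps K ∧ #K = k} := by
  refine ⟨#M, ?_⟩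
  rintro _ ⟨K, hKM, -, rfl⟩
  exact card_le_card hKM

theorem IsClique.card_le_zClique (hK : IsClique r Ps K) (hKM : K ⊆ M) : #K ≤ zClique r Ps M :=
  le_csSup (bddAbove_card_isClique r Ps M) ⟨K, hKM, hK, rfl⟩

theorem exists_isClique_card_eq_zClique (r : ℕ) (Ps : Set (Finset (Finset ℕ)))
    (M : Finset (Finset ℕ)) : ∃ K ⊆ M, IsClique r Ps K ∧ #K = zClique r Ps M := by
  have hne : {k | ∃ K ⊆ M, IsClique r Ps K ∧ #K = k}.Nonempty :=
    ⟨0, ∅, empty_subset M, by simp [IsClique], card_empty⟩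
  exact Nat.sSup_mem hne (bddAbove_card_isClique r Ps M)

theorem exists_isNoncrossing_of_le_zClique (hk : k ≤ zClique 2 {pAABB, pABBA} M) :
    ∃ K ⊆ M, IsNoncrossing K ∧ #K = k := by
  obtain ⟨K, hKM, hK, hcard⟩ := exists_isClique_card_eq_zClique 2 {pAABB, pABBA} M
  obtain ⟨K', hK', hcard'⟩ := exists_subset_card_eq (hcard ▸ hk)
  exact ⟨K', hK'.trans hKM, hK.isNoncrossing.mono hK', hcard'⟩

theorem card_monochromaticColors_le_zClique {β : Type*} [LinearOrder β] {c : ℕ → β}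
    (hc : Monotone c) (hM : IsMatching M) :
    #(monochromaticColors c M) ≤ zClique 2 {pAABB, pABBA} M := by
  have hedge : ∀ b ∈ monochromaticColors c M, ∃ e ∈ M, e.image c = {b} :=
    fun b => mem_monochromaticColors.1
  choose! E hEM hE using hedge
  have hinj : Set.InjOn E (monochromaticColors c M) := fun b hb b' hb' heq =>
    singleton_injective ((hE b hb).symm.trans (heq ▸ hE b' hb'))
  have hsubset : (monochromaticColors c M).image E ⊆ M := image_subset_iff.2 hEM
  have hlt {b b' : β} (hb : b ∈ monochromaticColors c M) (hb' : b' ∈ monochromaticColors c M)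
      (hbb' : b < b') : FormsPattern 2 (E b) (E b') pAABB := by
    refine formsPattern_pAABB_of_forall_lt (hM.card_eq_two _ (hEM b hb))
      (hM.card_eq_two _ (hEM b' hb')) fun x hx y hy => hc.reflect_lt ?_
    have hcx : c x = b := mem_singleton.1 (hE b hb ▸ mem_image_of_mem c hx)
    have hcy : c y = b' := mem_singleton.1 (hE b' hb' ▸ mem_image_of_mem c hy)
    rwa [hcx, hcy]
  have hclique : IsClique 2 {pAABB, pABBA} ((monochromaticColors c M).image E) := by
    refine ⟨fun e he => hM.card_eq_two e (hsubset he),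
      fun e he f hf hef => hM.pairwiseDisjoint (hsubset he) (hsubset hf) hef, ?_⟩
    simp only [forall_mem_image]
    intro b hb b' hb' hne
    refine ⟨pAABB, Set.mem_insert _ _, ?_⟩
    obtain hbb' | hbb' := (ne_of_apply_ne E hne).lt_or_gt
    · exact hlt hb hb' hbb'
    · exact (hlt hb' hb hbb').symm
  exact card_image_of_injOn hinj ▸ hclique.card_le_zClique hsubset

end Cliques

section Probability

open scoped Nat

variable {r n : ℕ} {A B C : Finset (Finset ℕ) → Prop}

theorem prob_le_one (r n : ℕ) (A : Finset (Finset ℕ) → Prop) : prob r n A ≤ 1 :=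
  div_le_one_of_le₀ (mod_cast card_filter_le _ _) (Nat.cast_nonneg _)

theorem one_le_prob_add_prob_add_prob (hne : (matchingFamilies r n).Nonempty)
    (h : ∀ M ∈ matchingFamilies r n, A M ∨ B M ∨ C M) :
    1 ≤ prob r n A + prob r n B + prob r n C := by
  have hcover : matchingFamilies r n ⊆ {M ∈ matchingFamilies r n | A M} ∪
      {M ∈ matchingFamilies r n | B M} ∪ {M ∈ matchingFamilies r n | C M} := by
    rw [← filter_or, ← filter_or]
    exact fun M hM => mem_filter.2 ⟨hM, or_assoc.2 (h M hM)⟩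
  simp only [prob, ← add_div]
  rw [one_le_div₀ (mod_cast hne.card_pos)]
  have hcard := (card_le_card hcover).trans (card_union_le _ _)
  exact_mod_cast hcard.trans (Nat.add_le_add_right (card_union_le _ _) _)

theorem matchingFamilies_two (n : ℕ) : matchingFamilies 2 n = perfectMatchings (Icc 1 (2 * n)) := by
  ext M
  simp only [matchingFamilies, mem_filter]
  constructor
  · rintro ⟨-, -, hcard, hdisjoint, hM⟩
    exact mem_perfectMatchings.2 ⟨⟨hcard, fun e he f hf hef => hdisjoint e he f hf hef⟩, hM⟩
  · intro hM
    obtain ⟨hmatch, hMV⟩ := mem_perfectMatchings.1 hM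
    have hcard : #M = n := by
      have := card_of_mem_perfectMatchings hM
      rw [Nat.card_Icc] at this
      lia
    refine ⟨?_, hcard, hmatch.card_eq_two, fun e he f hf => hmatch.pairwiseDisjoint he hf, hMV⟩
    exact mem_powerset.2 fun e he => mem_powerset.2 (subset_of_mem_perfectMatchings hM he)

theorem card_Icc_one_two_mul (n : ℕ) : #(Icc 1 (2 * n)) = 2 * n := by
  rw [Nat.card_Icc, Nat.add_sub_cancel]

theorem matchingFamilies_two_nonempty (n : ℕ) : (matchingFamilies 2 n).Nonempty := by
  rw [← card_pos, matchingFamilies_two, card_perfectMatchings (card_Icc_one_two_mul n)]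
  exact Nat.doubleFactorial_pos _

theorem prob_two_le_of_card_le [DecidablePred B] {p : ℝ}
    (hAB : ∀ M ∈ perfectMatchings (Icc 1 (2 * n)), A M → B M)
    (hB : (#{M ∈ perfectMatchings (Icc 1 (2 * n)) | B M} : ℝ) ≤ p * (2 * n - 1)‼) :
    prob 2 n A ≤ p := by
  rw [prob, matchingFamilies_two, card_perfectMatchings (card_Icc_one_two_mul n)]
  rw [div_le_iff₀ (mod_cast Nat.doubleFactorial_pos _)]
  refine hB.trans' (mod_cast card_le_card fun M hM => ?_)
  obtain ⟨hM, hA⟩ := mem_filter.1 hM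
  exact mem_filter.2 ⟨hM, hAB M hM hA⟩

theorem prob_le_zClique_le {k : ℕ} (hk : 2 * k ≤ n) :
    prob 2 n (fun M => k ≤ zClique 2 {pAABB, pABBA} M) ≤
      (4 * Real.exp 1 ^ 2 * n / k ^ 2) ^ k :=
  prob_two_le_of_card_le (fun _ _ => exists_isNoncrossing_of_le_zClique)
    (card_filter_exists_noncrossing_le (card_Icc_one_two_mul n) hk)

theorem card_filter_div_eq_le {s : ℕ} (hs : 0 < s) (V : Finset ℕ) (b : ℕ) :
    #{x ∈ V | x / s = b} ≤ s := by
  have hsubset : {x ∈ V | x / s = b} ⊆ Ico (s * b) (s * b + s) := by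
    intro x hx
    have hdiv := Nat.div_add_mod x s
    have hmod := Nat.mod_lt x hs
    rw [(mem_filter.1 hx).2] at hdiv
    exact mem_Ico.2 (by lia)
  simpa using card_le_card hsubset

theorem prob_zClique_lt_le {m s q j k : ℕ} {p : ℝ} (hm : 2 * n < s * m) (hp0 : 0 ≤ p) (hp1 : p ≤ 1)
    (hpq : p * (2 * n) ≤ q) (hj : m * q + 2 * j + k * s ≤ 2 * n) :
    prob 2 n (fun M => zClique 2 {pAABB, pABBA} M < k) ≤ 2 ^ m * (1 - p) ^ j := by
  have hs : 0 < s := Nat.pos_of_mul_pos_right (pos_of_gt hm)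
  have hcolor (x : ℕ) (hx : x ∈ Icc 1 (2 * n)) : x / s ∈ range m :=
    mem_range.2 (Nat.div_lt_of_lt_mul ((mem_Icc.1 hx).2.trans_lt hm))
  have hcard := card_Icc_one_two_mul n
  refine prob_two_le_of_card_le (B := fun M => #(monochromaticColors (· / s) M) < k) ?_ ?_
  · intro M hM
    refine (card_monochromaticColors_le_zClique (fun x y hxy => ?_)
      (isMatching_of_mem_perfectMatchings hM)).trans_lt
    exact Nat.div_le_div_right hxy
  · rw [mul_assoc, ← card_range m]
    refine card_filter_card_monochromaticColors_lt_le (q := q) hcard hcolor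
      (fun b _ => card_filter_div_eq_le hs _ b) hp0 hp1 ?_ ?_
    · rw [hcard]
      exact_mod_cast hpq
    · rwa [hcard, card_range]

end Probability

section SquareRootScale

variable {n k : ℕ}

theorem prob_zClique_lt_le_exp (hk : 0 < k) (hkn : 2048 * k ^ 2 ≤ n) (hnk : n < 4096 * k ^ 2) :
    prob 2 n (fun M => zClique 2 {pAABB, pABBA} M < k) ≤ Real.exp (-k) := by
  have hp : 1 / (64 * k : ℝ) ≤ 1 := by
    rw [div_le_one₀ (by positivity)]
    linarith [Nat.one_le_cast (α := ℝ).2 hk]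
  have hbound : prob 2 n (fun M => zClique 2 {pAABB, pABBA} M < k) ≤
      2 ^ (8 * k) * (1 - 1 / (64 * k)) ^ (1024 * k ^ 2) := by
    -- The colour classes are `8 * k` intervals of length `1024 * k`.
    refine prob_zClique_lt_le (s := 1024 * k) (q := 128 * k) (by lia) (by positivity) hp ?_ (by lia)
    have hn : (n : ℝ) ≤ 4096 * k ^ 2 := mod_cast hnk.le
    rw [div_mul_eq_mul_div, div_le_iff₀ (by positivity)]
    push_cast
    linarith
  calc prob 2 n (fun M => zClique 2 {pAABB, pABBA} M < k)
      ≤ (2 : ℝ) ^ (8 * k) * (1 - 1 / (64 * k)) ^ (1024 * k ^ 2) := hbound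
    _ ≤ Real.exp 1 ^ (8 * k) * Real.exp (-(1 / (64 * k))) ^ (1024 * k ^ 2) := by
      gcongr
      · exact Real.exp_one_gt_two.le
      · exact Real.one_sub_le_exp_neg _
    _ = Real.exp (-(8 * k)) := by
      rw [← Real.exp_nat_mul, ← Real.exp_nat_mul, ← Real.exp_add]
      congr 1
      push_cast
      field_simp
      ring
    _ ≤ Real.exp (-k) := by
      gcongr
      linarith [Nat.cast_nonneg (α := ℝ) k]

theorem prob_le_zClique_le_exp (hk : 0 < k) (hkn : 2048 * k ^ 2 ≤ n) (hnk : n < 4096 * k ^ 2) :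
    prob 2 n (fun M => 1024 * k ≤ zClique 2 {pAABB, pABBA} M) ≤ Real.exp (-k) := by
  have hn : (n : ℝ) ≤ 4096 * k ^ 2 := mod_cast hnk.le
  have hratio : 4 * Real.exp 1 ^ 2 * n / (1024 * k : ℕ) ^ 2 ≤ Real.exp (-1) := by
    have hcube : Real.exp 1 ^ 3 ≤ 64 := by
      calc Real.exp 1 ^ 3 ≤ 3 ^ 3 := by
            gcongr
            exact Real.exp_one_lt_three.le
        _ ≤ 64 := by norm_num
    rw [Real.exp_neg, ← one_div, le_div_iff₀ (Real.exp_pos 1), div_mul_eq_mul_div,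
      div_le_one₀ (by positivity)]
    calc 4 * Real.exp 1 ^ 2 * n * Real.exp 1 = 4 * Real.exp 1 ^ 3 * (n : ℝ) := by ring
      _ ≤ 4 * 64 * (4096 * k ^ 2 : ℝ) := by gcongr
      _ = ((1024 * k : ℕ) : ℝ) ^ 2 := by
        push_cast
        ring
  calc prob 2 n (fun M => 1024 * k ≤ zClique 2 {pAABB, pABBA} M)
      ≤ (4 * Real.exp 1 ^ 2 * n / (1024 * k : ℕ) ^ 2) ^ (1024 * k) :=
        prob_le_zClique_le (by nlinarith)
    _ ≤ Real.exp (-1) ^ (1024 * k) := by gcongr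
    _ ≤ Real.exp (-k) := by
      rw [← Real.exp_nat_mul, Real.exp_le_exp]
      push_cast
      linarith [Nat.cast_nonneg (α := ℝ) k]

theorem one_sub_le_prob_zClique (hk : 0 < k) (hkn : 2048 * k ^ 2 ≤ n) (hnk : n < 4096 * k ^ 2) :
    1 - 2 * Real.exp (-k) ≤ prob 2 n (fun M =>
      1 / 64 * (n : ℝ) ^ ((1 : ℝ) / 2) ≤ (zClique 2 {pAABB, pABBA} M : ℝ) ∧
      (zClique 2 {pAABB, pABBA} M : ℝ) ≤ 32 * (n : ℝ) ^ ((1 : ℝ) / 2)) := by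
  have hlower : (n : ℝ) ^ ((1 : ℝ) / 2) ≤ 64 * k := by
    rw [← Real.sqrt_eq_rpow]
    exact Real.sqrt_le_iff.2 ⟨by positivity, mod_cast (by lia : n ≤ (64 * k) ^ 2)⟩
  have hupper : 32 * k ≤ (n : ℝ) ^ ((1 : ℝ) / 2) := by
    rw [← Real.sqrt_eq_rpow]
    exact Real.le_sqrt_of_sq_le (mod_cast (by lia : (32 * k) ^ 2 ≤ n))
  have hcover := one_le_prob_add_prob_add_prob (matchingFamilies_two_nonempty n)
    (A := fun M => zClique 2 {pAABB, pABBA} M < k)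
    (B := fun M => 1024 * k ≤ zClique 2 {pAABB, pABBA} M)
    (C := fun M => 1 / 64 * (n : ℝ) ^ ((1 : ℝ) / 2) ≤ (zClique 2 {pAABB, pABBA} M : ℝ) ∧
      (zClique 2 {pAABB, pABBA} M : ℝ) ≤ 32 * (n : ℝ) ^ ((1 : ℝ) / 2)) fun M _ => by
    rw [or_iff_not_imp_left, or_iff_not_imp_left, not_lt, not_le]
    intro hkz hzk
    have hkz' : (k : ℝ) ≤ zClique 2 {pAABB, pABBA} M := mod_cast hkz
    have hzk' : (zClique 2 {pAABB, pABBA} M : ℝ) ≤ 1024 * k := mod_cast hzk.le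
    constructor <;> linarith
  linarith [prob_zClique_lt_le_exp hk hkn hnk, prob_le_zClique_le_exp hk hkn hnk]

theorem sq_sqrt_div_bounds (hk : 3 ≤ Nat.sqrt (n / 2048)) :
    2048 * Nat.sqrt (n / 2048) ^ 2 ≤ n ∧ n < 4096 * Nat.sqrt (n / 2048) ^ 2 := by
  have hle : Nat.sqrt (n / 2048) ^ 2 ≤ n / 2048 := Nat.sqrt_le' _
  have hlt : n / 2048 < (Nat.sqrt (n / 2048) + 1) ^ 2 := Nat.lt_succ_sqrt' _
  exact ⟨by lia, by nlinarith [Nat.lt_mul_div_succ n (show 0 < 2048 by simp)]⟩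

theorem tendsto_sqrt_div_atTop :
    Filter.Tendsto (fun n : ℕ => Nat.sqrt (n / 2048)) Filter.atTop Filter.atTop := by
  have hsqrt : Filter.Tendsto Nat.sqrt Filter.atTop Filter.atTop :=
    Filter.tendsto_atTop_atTop.2 fun b => ⟨b * b, fun _ => Nat.le_sqrt.2⟩
  exact hsqrt.comp (Nat.tendsto_div_const_atTop (by norm_num))

end SquareRootScale

/-- **Theorem.** A.a.s. `z_{{AABB, ABBA}}(RM_n^(2)) = Θ(n^(1/2))`. -/
theorem aas_P2_pair :
    ∃ c₁ c₂ : ℝ, 0 < c₁ ∧ 0 < c₂ ∧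
      Filter.Tendsto
        (fun n : ℕ => prob 2 n (fun M =>
          c₁ * (n : ℝ) ^ ((1 : ℝ) / 2) ≤ (zClique 2 {pAABB, pABBA} M : ℝ) ∧
          (zClique 2 {pAABB, pABBA} M : ℝ) ≤ c₂ * (n : ℝ) ^ ((1 : ℝ) / 2)))
        Filter.atTop (nhds 1) := by
  refine ⟨1 / 64, 32, by norm_num, by norm_num, ?_⟩
  have hexp : Filter.Tendsto (fun n : ℕ => Real.exp (-(Nat.sqrt (n / 2048) : ℝ))) Filter.atTop
      (nhds 0) :=
    Real.tendsto_exp_neg_atTop_nhds_zero.comp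
      (tendsto_natCast_atTop_atTop.comp tendsto_sqrt_div_atTop)
  have hlimit : Filter.Tendsto (fun n : ℕ => 1 - 2 * Real.exp (-(Nat.sqrt (n / 2048) : ℝ)))
      Filter.atTop (nhds 1) := by
    simpa using (hexp.const_mul 2).const_sub 1
  refine tendsto_of_tendsto_of_tendsto_of_le_of_le' hlimit tendsto_const_nhds ?_
    (Filter.Eventually.of_forall fun n => prob_le_one 2 n _)
  filter_upwards [tendsto_sqrt_div_atTop.eventually_ge_atTop 3] with n hn
  obtain ⟨hkn, hnk⟩ := sq_sqrt_div_bounds hn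
  exact one_sub_le_prob_zClique (by lia) hkn hnk
end

section
/- For r ≥ 2, let 𝒫 be a set of r-patterns, and suppose there exist constants C > 0 and 0 ≤ x < r such that a_𝒫(k) ≤ C^k · k^(kx) for all k ≥ 2. Then there exists a constant C'' > 0 such that the probability that z_𝒫(RM_n^(r)) ≤ C''·n^(1/(r−x)) tends to 1 as n → ∞. -/
open Finset
open scoped Classical

/-!
By Markov's inequality, the probability that a random matching contains a clique of size `k` is at
most the expected number of such cliques. A set of `r * k` vertices carries `a(k)` cliques, and each
of them extends to the same number of matchings, whence the expectation is
`a(k) * n (n - 1) ⋯ (n - k + 1) * r! ^ k / (r k)!`. With `a(k) ≤ C ^ k * k ^ (k x)` and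
`(r k)! ≥ k ^ (r k) / e ^ k` this is at most `(r! C e n / k ^ (r - x)) ^ k`, which tends to `0` as
soon as `k` is a large enough multiple of `n ^ (1 / (r - x))`.
-/

open scoped Nat

section UniformPartition

variable {α : Type*} [DecidableEq α] {r : ℕ} {U V : Finset α} {K M : Finset (Finset α)}

/-- `M` is a partition of the finite set `V` into sets of size `r`: an ordered `r`-matching, with
an arbitrary vertex set in place of `[rn]`. -/
structure IsUniformPartition (r : ℕ) (V : Finset α) (M : Finset (Finset α)) : Prop where
  card_eq : ∀ e ∈ M, #e = r
  pairwiseDisjoint : (M : Set (Finset α)).PairwiseDisjoint id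
  biUnion_eq : M.biUnion id = V

namespace IsUniformPartition

theorem subset (hM : IsUniformPartition r V M) {e : Finset α} (he : e ∈ M) : e ⊆ V :=
  hM.biUnion_eq ▸ subset_biUnion_of_mem id he

theorem subset_powersetCard (hM : IsUniformPartition r V M) : M ⊆ V.powersetCard r :=
  fun e he ↦ mem_powersetCard.2 ⟨hM.subset he, hM.card_eq e he⟩

theorem card_vertices (hM : IsUniformPartition r V M) : #V = r * #M := by
  rw [← hM.biUnion_eq, card_biUnion hM.pairwiseDisjoint, mul_comm]
  exact sum_const_nat hM.card_eq

theorem card_edges (hM : IsUniformPartition r V M) (hr : 0 < r) {m : ℕ} (hV : #V = r * m) :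
    #M = m :=
  Nat.eq_of_mul_eq_mul_left hr (hM.card_vertices.symm.trans hV)

theorem disjoint (hK : IsUniformPartition r U K) (hM : IsUniformPartition r V M)
    (hUV : Disjoint U V) (hr : 0 < r) : Disjoint K M := by
  refine Finset.disjoint_left.2 fun e heK heM ↦ ?_
  have he : e = ∅ :=
    disjoint_self_iff_empty e |>.1 <| hUV.mono (hK.subset heK) (hM.subset heM)
  have := hK.card_eq e heK
  simp_all

theorem union (hK : IsUniformPartition r U K) (hM : IsUniformPartition r V M)
    (hUV : Disjoint U V) : IsUniformPartition r (U ∪ V) (K ∪ M) where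
  card_eq e he := (mem_union.1 he).elim (hK.card_eq e) (hM.card_eq e)
  pairwiseDisjoint := by
    rw [coe_union, Set.pairwiseDisjoint_union]
    exact ⟨hK.pairwiseDisjoint, hM.pairwiseDisjoint,
      fun e he f hf _ ↦ hUV.mono (hK.subset he) (hM.subset hf)⟩
  biUnion_eq := by rw [union_biUnion, hK.biUnion_eq, hM.biUnion_eq]

theorem sdiff (hM : IsUniformPartition r V M) (hK : IsUniformPartition r U K) (hKM : K ⊆ M) :
    IsUniformPartition r (V \ U) (M \ K) where
  card_eq e he := hM.card_eq e (mem_sdiff.1 he).1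
  pairwiseDisjoint := hM.pairwiseDisjoint.subset (by simp)
  biUnion_eq := by
    have hdisj : Disjoint ((M \ K).biUnion id) U := by
      rw [← hK.biUnion_eq, disjoint_biUnion_left]
      refine fun e he ↦ (disjoint_biUnion_right _ _ _).2 fun f hf ↦ ?_
      obtain ⟨heM, heK⟩ := mem_sdiff.1 he
      exact hM.pairwiseDisjoint heM (hKM hf) fun hef ↦ heK (hef ▸ hf)
    rw [← hM.biUnion_eq, ← sdiff_union_of_subset hKM, union_biUnion, hK.biUnion_eq,
      union_sdiff_cancel_right hdisj, sdiff_union_of_subset hKM]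

theorem image {β : Type*} [DecidableEq β] {ρ : α → β} (hM : IsUniformPartition r V M)
    (hρ : Set.InjOn ρ V) : IsUniformPartition r (V.image ρ) (M.image (Finset.image ρ)) where
  card_eq := forall_mem_image.2 fun e he ↦ by
    rw [card_image_of_injOn (hρ.mono (hM.subset he)), hM.card_eq e he]
  pairwiseDisjoint := by
    rw [coe_image]
    rintro _ ⟨e, he, rfl⟩ _ ⟨f, hf, rfl⟩ hne
    have hef : Disjoint e f := hM.pairwiseDisjoint he hf (by rintro rfl; exact hne rfl)
    have hinj : Set.InjOn ρ (e ∪ f : Set α) :=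
      hρ.mono (Set.union_subset (hM.subset he) (hM.subset hf))
    change Disjoint (e.image ρ) (f.image ρ)
    rw [disjoint_iff_inter_eq_empty, ← image_inter_of_injOn e f hinj,
      disjoint_iff_inter_eq_empty.1 hef, image_empty]
  biUnion_eq := by rw [← hM.biUnion_eq, image_biUnion, biUnion_image]; rfl

end IsUniformPartition

theorem isUniformPartition_singleton (e : Finset α) : IsUniformPartition #e e {e} where
  card_eq := by simp
  pairwiseDisjoint := by simp
  biUnion_eq := by simp

theorem isUniformPartition_empty_iff (hr : 0 < r) : IsUniformPartition r ∅ M ↔ M = ∅ := by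
  refine ⟨fun hM ↦ card_eq_zero.1 (hM.card_edges hr (by simp)), ?_⟩
  rintro rfl
  exact ⟨by simp, by simp, by simp⟩

/-- The partitions of `V` into sets of size `r`. -/
noncomputable def uniformPartitions (r : ℕ) (V : Finset α) : Finset (Finset (Finset α)) :=
  {M ∈ (V.powersetCard r).powerset | IsUniformPartition r V M}

theorem mem_uniformPartitions : M ∈ uniformPartitions r V ↔ IsUniformPartition r V M := by
  simpa [uniformPartitions] using IsUniformPartition.subset_powersetCard

theorem card_filter_superset_uniformPartitions (hr : 0 < r) (hK : IsUniformPartition r U K)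
    (hUV : U ⊆ V) :
    #{M ∈ uniformPartitions r V | K ⊆ M} = #(uniformPartitions r (V \ U)) := by
  have hdisj : Disjoint (V \ U) U := sdiff_disjoint
  refine card_nbij' (· \ K) (· ∪ K) ?_ ?_ ?_ ?_
  · intro M hM
    obtain ⟨hM, hKM⟩ := mem_filter.1 hM
    exact mem_uniformPartitions.2 ((mem_uniformPartitions.1 hM).sdiff hK hKM)
  · intro M hM
    have hMK := (mem_uniformPartitions.1 hM).union hK hdisj
    rw [sdiff_union_of_subset hUV] at hMK
    exact mem_filter.2 ⟨mem_uniformPartitions.2 hMK, subset_union_right⟩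
  · exact fun M hM ↦ sdiff_union_of_subset (mem_filter.1 hM).2
  · exact fun M hM ↦
      union_sdiff_cancel_right ((mem_uniformPartitions.1 hM).disjoint hK hdisj hr)

theorem choose_mul_uniformBell_sub {n k : ℕ} (hr : 0 < r) (hkn : k ≤ n) :
    (r * n).choose (r * k) * (n - k).uniformBell r * (r * k)! =
      n.descFactorial k * r ! ^ k * n.uniformBell r := by
  have hbell (m : ℕ) : m.uniformBell r * r ! ^ m * m ! = (r * m)! := by
    rw [Nat.uniformBell_mul_eq m hr.ne', mul_comm]
  have hchoose := Nat.choose_mul_factorial_mul_factorial (Nat.mul_le_mul_left r hkn)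
  rw [← Nat.mul_sub] at hchoose
  have hpos : 0 < r ! ^ (n - k) * (n - k)! := by positivity
  refine Nat.eq_of_mul_eq_mul_right hpos ?_
  calc (r * n).choose (r * k) * (n - k).uniformBell r * (r * k)! * (r ! ^ (n - k) * (n - k)!)
      = (r * n).choose (r * k) * (r * k)! *
          ((n - k).uniformBell r * r ! ^ (n - k) * (n - k)!) := by ring
    _ = n.uniformBell r * r ! ^ n * n ! := by rw [hbell, hchoose, hbell]
    _ = n.uniformBell r * (r ! ^ k * r ! ^ (n - k)) * ((n - k)! * n.descFactorial k) := by
      rw [← pow_add, Nat.add_sub_of_le hkn, Nat.factorial_mul_descFactorial hkn]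
    _ = n.descFactorial k * r ! ^ k * n.uniformBell r * (r ! ^ (n - k) * (n - k)!) := by ring

theorem mul_card_uniformPartitions {m : ℕ} (hr : 0 < r) (hV : #V = r * m) :
    m * #(uniformPartitions r V) = ∑ e ∈ V.powersetCard r, #(uniformPartitions r (V \ e)) := by
  calc m * #(uniformPartitions r V)
      = ∑ M ∈ uniformPartitions r V, #{e ∈ V.powersetCard r | e ∈ M} := by
        rw [mul_comm, sum_const_nat]
        intro M hM
        rw [mem_uniformPartitions] at hM
        rw [filter_mem_eq_inter, inter_eq_right.2 hM.subset_powersetCard, hM.card_edges hr hV]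
    _ = ∑ e ∈ V.powersetCard r, #{M ∈ uniformPartitions r V | e ∈ M} :=
        sum_card_bipartiteAbove_eq_sum_card_bipartiteBelow _
    _ = ∑ e ∈ V.powersetCard r, #(uniformPartitions r (V \ e)) := by
        refine sum_congr rfl fun e he ↦ ?_
        obtain ⟨heV, rfl⟩ := mem_powersetCard.1 he
        simpa using
          card_filter_superset_uniformPartitions hr (isUniformPartition_singleton e) heV

theorem card_uniformPartitions {m : ℕ} (hr : 0 < r) (hV : #V = r * m) :
    #(uniformPartitions r V) = m.uniformBell r := by
  induction m generalizing V with
  | zero =>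
    obtain rfl : V = ∅ := by simpa using hV
    have : uniformPartitions r (∅ : Finset α) = {∅} := by
      ext M
      rw [mem_uniformPartitions, isUniformPartition_empty_iff hr, mem_singleton]
    rw [this, card_singleton, Nat.uniformBell_zero_left]
  | succ m ih =>
    have hsdiff : ∀ e ∈ V.powersetCard r, #(uniformPartitions r (V \ e)) = m.uniformBell r := by
      intro e he
      obtain ⟨heV, he⟩ := mem_powersetCard.1 he
      exact ih (by rw [card_sdiff_of_subset heV, hV, he, mul_add_one, Nat.add_sub_cancel])
    have hcount := mul_card_uniformPartitions hr hV
    rw [sum_const_nat hsdiff, card_powersetCard, hV] at hcount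
    have hbell := choose_mul_uniformBell_sub hr (Nat.le_add_left 1 m)
    simp only [Nat.add_sub_cancel, mul_one, Nat.descFactorial_one, pow_one] at hbell
    refine Nat.eq_of_mul_eq_mul_left (by positivity : 0 < (m + 1) * r !) ?_
    linear_combination r ! * hcount + hbell

end UniformPartition

theorem exists_strictMonoOn_image_eq {α β : Type*} [LinearOrder α] [LinearOrder β] [Nonempty β]
    {s : Finset α} {t : Finset β} (h : #s = #t) :
    ∃ ρ : α → β, StrictMonoOn ρ s ∧ s.image ρ = t := by
  let iso : s ≃o t := (s.orderIsoOfFin rfl).symm.trans (t.orderIsoOfFin h.symm)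
  let ρ : α → β := fun a ↦ if ha : a ∈ s then iso ⟨a, ha⟩ else Classical.arbitrary β
  have hρ {a : α} (ha : a ∈ s) : ρ a = iso ⟨a, ha⟩ := dif_pos ha
  have hmono : StrictMonoOn ρ s := by
    intro a ha b hb hab
    rw [hρ ha, hρ hb]
    exact iso.strictMono hab
  refine ⟨ρ, hmono, eq_of_subset_of_card_le ?_ ?_⟩
  · intro b hb
    obtain ⟨a, ha, rfl⟩ := mem_image.1 hb
    exact hρ ha ▸ (iso ⟨a, ha⟩).2
  · rw [card_image_of_injOn hmono.injOn, h]

section Clique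

variable {r k n : ℕ} {Ps : Set (Finset (Finset ℕ))} {K L M H : Finset (Finset ℕ)}
  {U W : Finset ℕ}

theorem FormsPattern.image {e f : Finset ℕ} {P : Finset (Finset ℕ)} {ρ : ℕ → ℕ}
    (h : FormsPattern r e f P) (hρ : StrictMonoOn ρ ↑(e ∪ f)) :
    FormsPattern r (e.image ρ) (f.image ρ) P := by
  obtain ⟨ψ, hψ, hψ_image, rfl⟩ := h
  set g := Function.invFunOn ρ ↑(e ∪ f)
  have hg : ∀ v ∈ e ∪ f, g (ρ v) = v := fun v hv ↦ hρ.injOn.leftInvOn_invFunOn hv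
  have himage {s : Finset ℕ} (hs : s ⊆ e ∪ f) : (s.image ρ).image (ψ ∘ g) = s.image ψ := by
    rw [image_image]
    exact image_congr fun v hv ↦ congrArg ψ (hg v (hs hv))
  refine ⟨ψ ∘ g, ?_, ?_, ?_⟩
  · rw [← image_union, coe_image]
    rintro _ ⟨u, hu, rfl⟩ _ ⟨v, hv, rfl⟩ huv
    simpa only [Function.comp_apply, hg u hu, hg v hv] using
      hψ hu hv ((hρ.lt_iff_lt hu hv).1 huv)
  · rw [← image_union, himage subset_rfl, hψ_image]
  · rw [himage subset_union_left, himage subset_union_right]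

namespace IsClique

theorem isUniformPartition (hK : IsClique r Ps K) : IsUniformPartition r (K.biUnion id) K :=
  ⟨hK.1, hK.2.1, rfl⟩

theorem subset (hK : IsClique r Ps K) (hLK : L ⊆ K) : IsClique r Ps L :=
  ⟨fun e he ↦ hK.1 e (hLK he), fun e he f hf ↦ hK.2.1 e (hLK he) f (hLK hf),
    fun e he f hf ↦ hK.2.2 e (hLK he) f (hLK hf)⟩

theorem subset_powersetCard_iff (hK : IsClique r Ps K) :
    K ⊆ U.powersetCard r ↔ K.biUnion id ⊆ U := by
  rw [biUnion_subset]
  exact ⟨fun h e he ↦ (mem_powersetCard.1 (h he)).1,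
    fun h e he ↦ mem_powersetCard.2 ⟨h e he, hK.1 e he⟩⟩

theorem image {ρ : ℕ → ℕ} (hK : IsClique r Ps K) (hρ : StrictMonoOn ρ ↑(K.biUnion id)) :
    IsClique r Ps (K.image (Finset.image ρ)) := by
  have hpart := hK.isUniformPartition.image hρ.injOn
  refine ⟨hpart.card_eq, hpart.pairwiseDisjoint, ?_⟩
  refine forall_mem_image.2 fun e he ↦ forall_mem_image.2 fun f hf hne ↦ ?_
  obtain ⟨P, hP, hefP⟩ := hK.2.2 e he f hf (by rintro rfl; exact hne rfl)
  have hef : e ∪ f ⊆ K.biUnion id :=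
    union_subset (subset_biUnion_of_mem id he) (subset_biUnion_of_mem id hf)
  exact ⟨P, hP, hefP.image (hρ.mono hef)⟩

end IsClique

theorem le_zClique_iff : k ≤ zClique r Ps M ↔ ∃ K ⊆ M, IsClique r Ps K ∧ #K = k := by
  have hbdd : BddAbove {k | ∃ K ⊆ M, IsClique r Ps K ∧ #K = k} := by
    refine ⟨#M, ?_⟩
    rintro _ ⟨K, hKM, -, rfl⟩
    exact card_le_card hKM
  refine ⟨fun hk ↦ ?_, fun hk ↦ le_csSup hbdd hk⟩
  have hne : {k | ∃ K ⊆ M, IsClique r Ps K ∧ #K = k}.Nonempty :=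
    ⟨0, ∅, empty_subset M, ⟨by simp, by simp, by simp⟩, rfl⟩
  obtain ⟨K, hKM, hK, hKcard⟩ := Nat.sSup_mem hne hbdd
  obtain ⟨L, hLK, hL⟩ := exists_subset_card_eq (hk.trans hKcard.ge)
  exact ⟨L, hLK.trans hKM, hK.subset hLK, hL⟩

/-- The `Ps`-cliques of size `k` all of whose edges belong to `H`. Taking for `H` a matching gives
the random variable of the first moment method, taking for `H` all `r`-subsets of `U` gives all
the cliques on vertices from `U`. -/
noncomputable def cliquesIn (r : ℕ) (Ps : Set (Finset (Finset ℕ))) (k : ℕ)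
    (H : Finset (Finset ℕ)) : Finset (Finset (Finset ℕ)) :=
  {K ∈ H.powersetCard k | IsClique r Ps K}

theorem mem_cliquesIn : K ∈ cliquesIn r Ps k H ↔ K ⊆ H ∧ #K = k ∧ IsClique r Ps K := by
  rw [cliquesIn, mem_filter, mem_powersetCard, and_assoc]

theorem cliquesIn_nonempty_iff : (cliquesIn r Ps k M).Nonempty ↔ k ≤ zClique r Ps M := by
  simp only [le_zClique_iff, Finset.Nonempty, mem_cliquesIn, and_comm (a := #_ = k)]

theorem filter_subset_cliquesIn (hMH : M ⊆ H) :
    {K ∈ cliquesIn r Ps k H | K ⊆ M} = cliquesIn r Ps k M := by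
  ext K
  simp only [mem_filter, mem_cliquesIn]
  exact ⟨fun h ↦ ⟨h.2, h.1.2⟩, fun h ↦ ⟨⟨h.1.trans hMH, h.2⟩, h.1⟩⟩

theorem mem_cliquesIn_powersetCard_iff (hr : 0 < r) (hU : #U = r * k) :
    K ∈ cliquesIn r Ps k (U.powersetCard r) ↔ IsClique r Ps K ∧ K.biUnion id = U := by
  rw [mem_cliquesIn]
  constructor
  · rintro ⟨hKU, hk, hK⟩
    refine ⟨hK, eq_of_subset_of_card_le (hK.subset_powersetCard_iff.1 hKU) ?_⟩
    rw [hU, hK.isUniformPartition.card_vertices, hk]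
  · rintro ⟨hK, rfl⟩
    exact ⟨hK.isUniformPartition.subset_powersetCard, hK.isUniformPartition.card_edges hr hU, hK⟩

theorem card_cliquesIn_powersetCard_le (hUW : #U = #W) :
    #(cliquesIn r Ps k (U.powersetCard r)) ≤ #(cliquesIn r Ps k (W.powersetCard r)) := by
  obtain ⟨ρ, hρ, rfl⟩ := exists_strictMonoOn_image_eq hUW
  have hinj : Set.InjOn (Finset.image ρ) U.powerset := image_injOn_powerset_of_injOn hρ.injOn
  have hsub : U.powersetCard r ⊆ U.powerset := fun e he ↦ mem_powerset.2 (mem_powersetCard.1 he).1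
  refine card_le_card_of_injOn (Finset.image (Finset.image ρ)) ?_ ?_
  · intro K hK
    obtain ⟨hKU, hk, hK⟩ := mem_cliquesIn.1 hK
    have hvert := hK.subset_powersetCard_iff.1 hKU
    have hKρ := hK.image (hρ.mono hvert)
    refine mem_cliquesIn.2 ⟨hKρ.subset_powersetCard_iff.2 ?_, ?_, hKρ⟩
    · rw [(hK.isUniformPartition.image (hρ.injOn.mono hvert)).biUnion_eq]
      exact image_subset_image hvert
    · rw [card_image_of_injOn (hinj.mono (hKU.trans hsub)), hk]
  · refine (image_injOn_powerset_of_injOn hinj).mono fun K hK ↦ ?_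
    exact mem_powerset.2 ((mem_cliquesIn.1 hK).1.trans hsub)

theorem isOrderedMatching_iff (hr : 0 < r) :
    IsOrderedMatching r n M ↔ IsUniformPartition r (Icc 1 (r * n)) M := by
  refine ⟨fun ⟨_, hcard, hdisj, hunion⟩ ↦ ⟨hcard, hdisj, hunion⟩, fun hM ↦ ?_⟩
  exact ⟨hM.card_edges hr (by simp), hM.card_eq, hM.pairwiseDisjoint, hM.biUnion_eq⟩

theorem mem_powerset_powerset_of_isOrderedMatching (hM : IsOrderedMatching r n M) :
    M ∈ (Icc 1 (r * n)).powerset.powerset := by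
  obtain ⟨-, -, -, hunion⟩ := hM
  exact mem_powerset.2 fun e he ↦ mem_powerset.2 (hunion ▸ subset_biUnion_of_mem id he)

theorem matchingFamilies_eq (hr : 0 < r) :
    matchingFamilies r n = uniformPartitions r (Icc 1 (r * n)) := by
  ext M
  rw [mem_uniformPartitions, ← isOrderedMatching_iff hr, matchingFamilies, mem_filter]
  exact and_iff_right_of_imp mem_powerset_powerset_of_isOrderedMatching

theorem card_matchingFamilies (hr : 0 < r) : #(matchingFamilies r n) = n.uniformBell r := by
  rw [matchingFamilies_eq hr, card_uniformPartitions hr (Nat.card_Icc 1 (r * n))]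

theorem card_matchingFamilies_pos (hr : 0 < r) : 0 < #(matchingFamilies r n) := by
  rw [card_matchingFamilies hr]
  refine Nat.pos_of_ne_zero fun h ↦ Nat.factorial_ne_zero (n * r) ?_
  rw [← Nat.uniformBell_mul_eq n hr.ne', h, zero_mul, zero_mul]

theorem cliqueCount_eq (hr : 0 < r) :
    cliqueCount r Ps k = #(cliquesIn r Ps k ((Icc 1 (r * k)).powersetCard r)) := by
  rw [cliqueCount]
  congr 1
  ext K
  rw [mem_filter, mem_cliquesIn_powersetCard_iff hr (by simp)]
  constructor
  · rintro ⟨-, hM, hK⟩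
    exact ⟨hK, ((isOrderedMatching_iff hr).1 hM).biUnion_eq⟩
  · rintro ⟨hK, hunion⟩
    have hM := (isOrderedMatching_iff hr).2 (hunion ▸ hK.isUniformPartition)
    exact ⟨mem_powerset_powerset_of_isOrderedMatching hM, hM, hK⟩

theorem card_cliquesIn_powersetCard_of_card_eq (hr : 0 < r) (hU : #U = r * k) :
    #(cliquesIn r Ps k (U.powersetCard r)) = cliqueCount r Ps k := by
  have hcard : #U = #(Icc 1 (r * k)) := by simp [hU]
  rw [cliqueCount_eq hr]
  exact (card_cliquesIn_powersetCard_le hcard).antisymm (card_cliquesIn_powersetCard_le hcard.symm)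

theorem card_cliquesIn_powersetCard (V : Finset ℕ) (hr : 0 < r) :
    #(cliquesIn r Ps k (V.powersetCard r)) = (#V).choose (r * k) * cliqueCount r Ps k := by
  have hmaps : ∀ K ∈ cliquesIn r Ps k (V.powersetCard r),
      K.biUnion id ∈ V.powersetCard (r * k) := by
    intro K hKmem
    obtain ⟨hKV, rfl, hK⟩ := mem_cliquesIn.1 hKmem
    exact mem_powersetCard.2
      ⟨hK.subset_powersetCard_iff.1 hKV, hK.isUniformPartition.card_vertices⟩
  rw [card_eq_sum_card_fiberwise hmaps, ← card_powersetCard]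
  refine sum_const_nat fun U hU ↦ ?_
  obtain ⟨hUV, hU⟩ := mem_powersetCard.1 hU
  rw [← card_cliquesIn_powersetCard_of_card_eq hr hU]
  congr 1
  ext K
  rw [mem_filter, mem_cliquesIn_powersetCard_iff hr hU, mem_cliquesIn]
  constructor
  · rintro ⟨⟨-, -, hK⟩, hunion⟩
    exact ⟨hK, hunion⟩
  · rintro ⟨hK, rfl⟩
    exact ⟨⟨hK.subset_powersetCard_iff.2 hUV,
      hK.isUniformPartition.card_edges hr hU, hK⟩, rfl⟩

end Clique

section FirstMoment

open Filter Topology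

variable {r n k : ℕ} {Ps : Set (Finset (Finset ℕ))}

theorem prob_not (hr : 0 < r) (A : Finset (Finset ℕ) → Prop) :
    prob r n (fun M ↦ ¬ A M) = 1 - prob r n A := by
  have hpos : (0 : ℝ) < #(matchingFamilies r n) := mod_cast card_matchingFamilies_pos hr
  rw [prob, prob, eq_sub_iff_add_eq', ← add_div, div_eq_one_iff_eq hpos.ne', ← Nat.cast_add,
    Nat.cast_inj]
  convert card_filter_add_card_filter_not A

theorem prob_nonneg (A : Finset (Finset ℕ) → Prop) : 0 ≤ prob r n A := by
  rw [prob]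
  positivity

theorem prob_le_expect_card {ι : Type*} (S : Finset (Finset ℕ) → Finset ι) :
    prob r n (fun M ↦ (S M).Nonempty) ≤ expect r n fun M ↦ #(S M) := by
  rw [prob, _root_.expect, card_filter]
  push_cast
  gcongr with M
  split_ifs with hM
  · exact mod_cast hM.card_pos
  · positivity

theorem sum_card_cliquesIn (hr : 0 < r) (hkn : k ≤ n) :
    ∑ M ∈ matchingFamilies r n, #(cliquesIn r Ps k M) =
      (r * n).choose (r * k) * cliqueCount r Ps k * (n - k).uniformBell r := by
  rw [matchingFamilies_eq hr]
  set V := Icc 1 (r * n)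
  have hV : #V = r * n := by simp [V]
  have hextend : ∀ K ∈ cliquesIn r Ps k (V.powersetCard r),
      #{M ∈ uniformPartitions r V | K ⊆ M} = (n - k).uniformBell r := by
    intro K hKmem
    obtain ⟨hKV, rfl, hK⟩ := mem_cliquesIn.1 hKmem
    have hvert := hK.subset_powersetCard_iff.1 hKV
    rw [card_filter_superset_uniformPartitions hr hK.isUniformPartition hvert]
    apply card_uniformPartitions hr
    rw [card_sdiff_of_subset hvert, hV, hK.isUniformPartition.card_vertices, Nat.mul_sub]
  calc ∑ M ∈ uniformPartitions r V, #(cliquesIn r Ps k M)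
      = ∑ M ∈ uniformPartitions r V, #{K ∈ cliquesIn r Ps k (V.powersetCard r) | K ⊆ M} := by
        refine sum_congr rfl fun M hM ↦ ?_
        rw [filter_subset_cliquesIn (mem_uniformPartitions.1 hM).subset_powersetCard]
    _ = ∑ K ∈ cliquesIn r Ps k (V.powersetCard r), #{M ∈ uniformPartitions r V | K ⊆ M} :=
        sum_card_bipartiteAbove_eq_sum_card_bipartiteBelow _
    _ = (r * n).choose (r * k) * cliqueCount r Ps k * (n - k).uniformBell r := by
        rw [sum_const_nat hextend, card_cliquesIn_powersetCard V hr, hV]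

theorem sum_card_cliquesIn_mul_factorial (hr : 0 < r) :
    (∑ M ∈ matchingFamilies r n, #(cliquesIn r Ps k M)) * (r * k)! =
      cliqueCount r Ps k * (n.descFactorial k * r ! ^ k) * #(matchingFamilies r n) := by
  rcases le_or_gt k n with hkn | hnk
  · rw [sum_card_cliquesIn hr hkn, card_matchingFamilies hr]
    linear_combination cliqueCount r Ps k * choose_mul_uniformBell_sub hr hkn
  · have hempty : ∀ M ∈ matchingFamilies r n, #(cliquesIn r Ps k M) = 0 := by
      intro M hM
      have hMn : #M = n := (mem_filter.1 hM).2.1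
      rw [cliquesIn, powersetCard_eq_empty.2 (hMn.trans_lt hnk), filter_empty, card_empty]
    rw [sum_eq_zero hempty, Nat.descFactorial_of_lt hnk]
    simp

theorem expect_card_cliquesIn (hr : 0 < r) :
    expect r n (fun M ↦ #(cliquesIn r Ps k M)) =
      cliqueCount r Ps k * (n.descFactorial k * r ! ^ k) / (r * k)! := by
  have hpos : (0 : ℝ) < #(matchingFamilies r n) := mod_cast card_matchingFamilies_pos hr
  rw [_root_.expect, div_eq_div_iff hpos.ne' (by positivity)]
  exact mod_cast sum_card_cliquesIn_mul_factorial hr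

theorem pow_mul_le_exp_pow_mul_factorial (r k : ℕ) :
    (k : ℝ) ^ (r * k) ≤ Real.exp 1 ^ k * (r * k)! := by
  rw [← Real.exp_nat_mul, mul_one, ← div_le_iff₀ (by positivity)]
  exact Real.pow_div_factorial_le_exp k (by positivity) (r * k)

theorem expect_card_cliquesIn_le {C x : ℝ} (hr : 0 < r) (hk : 0 < k)
    (ha : (cliqueCount r Ps k : ℝ) ≤ C ^ k * (k : ℝ) ^ ((k : ℝ) * x)) :
    expect r n (fun M ↦ #(cliquesIn r Ps k M)) ≤
      (r ! * C * Real.exp 1 * n / (k : ℝ) ^ ((r : ℝ) - x)) ^ k := by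
  have hk' : (0 : ℝ) < k := mod_cast hk
  have hpow : (k : ℝ) ^ (r * k) = (k : ℝ) ^ ((k : ℝ) * x) * ((k : ℝ) ^ ((r : ℝ) - x)) ^ k := by
    rw [← Real.rpow_mul_natCast hk'.le, ← Real.rpow_add hk', ← Real.rpow_natCast]
    congr 1
    push_cast
    ring
  have hfact := pow_mul_le_exp_pow_mul_factorial r k
  have hdesc : (n.descFactorial k : ℝ) ≤ n ^ k := mod_cast Nat.descFactorial_le_pow n k
  have hnonneg : 0 ≤ C ^ k * (k : ℝ) ^ ((k : ℝ) * x) := ha.trans' (by positivity)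
  rw [expect_card_cliquesIn hr]
  calc (cliqueCount r Ps k * (n.descFactorial k * r ! ^ k) / (r * k)! : ℝ)
      ≤ C ^ k * (k : ℝ) ^ ((k : ℝ) * x) * (n ^ k * r ! ^ k) / (r * k)! := by gcongr
    _ ≤ C ^ k * (k : ℝ) ^ ((k : ℝ) * x) * (n ^ k * r ! ^ k) /
          ((k : ℝ) ^ (r * k) / Real.exp 1 ^ k) := by
        gcongr
        rwa [div_le_iff₀' (by positivity)]
    _ = (r ! * C * Real.exp 1 * n / (k : ℝ) ^ ((r : ℝ) - x)) ^ k := by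
        simp only [hpow, div_pow, mul_pow]
        field_simp

theorem prob_lt_zClique_le {C x t : ℝ} (hr : 0 < r) (hC : 0 < C) (hxr : x < r) (ht : 0 < t)
    (hnt : 2 * (r ! * C * Real.exp 1) * n ≤ t ^ ((r : ℝ) - x))
    (ha : (cliqueCount r Ps (⌊t⌋₊ + 1) : ℝ) ≤
      C ^ (⌊t⌋₊ + 1) * ((⌊t⌋₊ + 1 : ℕ) : ℝ) ^ (((⌊t⌋₊ + 1 : ℕ) : ℝ) * x)) :
    prob r n (fun M ↦ t < zClique r Ps M) ≤ (1 / 2) ^ (⌊t⌋₊ + 1) := by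
  have hevent (M : Finset (Finset ℕ)) :
      t < zClique r Ps M ↔ (cliquesIn r Ps (⌊t⌋₊ + 1) M).Nonempty := by
    rw [cliquesIn_nonempty_iff, Nat.succ_le_iff, Nat.floor_lt ht.le]
  have htk : t ≤ (⌊t⌋₊ + 1 : ℕ) := mod_cast (Nat.lt_floor_add_one t).le
  simp only [hevent]
  refine (prob_le_expect_card _).trans <|
    (expect_card_cliquesIn_le hr (Nat.succ_pos _) ha).trans ?_
  refine pow_le_pow_left₀ (by positivity) ?_ _
  rw [div_le_iff₀ (by positivity)]
  linarith [Real.rpow_le_rpow ht.le htk (sub_nonneg.2 hxr.le)]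

theorem tendsto_prob_zClique_le {C x : ℝ} {t : ℕ → ℝ} (hr : 0 < r) (hC : 0 < C) (hxr : x < r)
    (ht : Tendsto t atTop atTop)
    (hnt : ∀ᶠ n : ℕ in atTop, 2 * (r ! * C * Real.exp 1) * n ≤ t n ^ ((r : ℝ) - x))
    (ha : ∀ᶠ k : ℕ in atTop, (cliqueCount r Ps k : ℝ) ≤ C ^ k * (k : ℝ) ^ ((k : ℝ) * x)) :
    Tendsto (fun n ↦ prob r n fun M ↦ zClique r Ps M ≤ t n) atTop (𝓝 1) := by
  have hk : Tendsto (fun n ↦ ⌊t n⌋₊ + 1) atTop atTop :=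
    (tendsto_add_atTop_nat 1).comp (tendsto_nat_floor_atTop.comp ht)
  have hpow : Tendsto (fun n ↦ (1 / 2 : ℝ) ^ (⌊t n⌋₊ + 1)) atTop (𝓝 0) :=
    (tendsto_pow_atTop_nhds_zero_of_lt_one (by norm_num) (by norm_num)).comp hk
  have hbad : Tendsto (fun n ↦ prob r n fun M ↦ t n < zClique r Ps M) atTop (𝓝 0) := by
    refine squeeze_zero' (.of_forall fun n ↦ prob_nonneg _) ?_ hpow
    filter_upwards [ht.eventually_gt_atTop 0, hnt, hk.eventually ha] with n htn hnt ha
    exact prob_lt_zClique_le hr hC hxr htn hnt ha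
  simpa only [← not_le, prob_not hr, sub_sub_cancel, sub_zero] using hbad.const_sub 1

end FirstMoment

/-- **Lemma (generic first moment method).** If `a_Ps(k) ≤ C^k·k^(kx)` for all `k ≥ 2`,
where `C > 0` and `0 ≤ x < r`, then a.a.s. `z_Ps(RM_n^(r)) = O(n^(1/(r−x)))`. -/
theorem first_moment_meta (r : ℕ) (hr : 2 ≤ r) (Ps : Set (Finset (Finset ℕ)))
    (hPs : ∀ P ∈ Ps, IsOrderedMatching r 2 P)
    (C x : ℝ) (hC : 0 < C) (hx0 : 0 ≤ x) (hxr : x < (r : ℝ))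
    (ha : ∀ k : ℕ, 2 ≤ k → (cliqueCount r Ps k : ℝ) ≤ C ^ k * (k : ℝ) ^ ((k : ℝ) * x)) :
    ∃ C'' : ℝ, 0 < C'' ∧
      Filter.Tendsto
        (fun n : ℕ => prob r n (fun M =>
          (zClique r Ps M : ℝ) ≤ C'' * (n : ℝ) ^ ((1 : ℝ) / ((r : ℝ) - x))))
        Filter.atTop (nhds 1) := by
  have hrx : 0 < (r : ℝ) - x := sub_pos.2 hxr
  set D : ℝ := 2 * (r ! * C * Real.exp 1)
  set α : ℝ := 1 / ((r : ℝ) - x) with hα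
  have hD : 0 < D := by positivity
  have hα_pos : 0 < α := by positivity
  refine ⟨D ^ α, by positivity, tendsto_prob_zClique_le (by lia) hC hxr ?_ ?_ ?_⟩
  · exact ((tendsto_rpow_atTop hα_pos).comp tendsto_natCast_atTop_atTop).const_mul_atTop
      (by positivity)
  · refine .of_forall fun n ↦ ge_of_eq ?_
    calc (D ^ α * (n : ℝ) ^ α) ^ ((r : ℝ) - x) = ((D * n) ^ α) ^ ((r : ℝ) - x) := by
          rw [Real.mul_rpow hD.le n.cast_nonneg]
      _ = D * n := by
          rw [← Real.rpow_mul (by positivity), hα, one_div_mul_cancel hrx.ne', Real.rpow_one]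
  · filter_upwards [Filter.eventually_ge_atTop 2] with k hk using ha k hk
end
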